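/- arXiv:2212.03944 — 2 statements merged into one kernel-verified Lean document; each statement's English description precedes it below -/
import Mathlib

section
/- Let X₁,…,Xₙ be i.i.d. from a probability measure μ on a Polish space 𝒳. (i) The bivariate empirical measures 𝔏_n = (1/n)Σ_{i=1}^n δ_{(i/n, X_i)} satisfy a large deviation principle at speed n on ℳ (with the weak topology) with the good rate function I(ν) = D(ν|ρ) if ν ∈ 𝒯ℳ and I(ν) = +∞ otherwise. (ii) The random measures 𝔏̃_n ∈ 𝒯ℳ, defined for each realization of X as the law of (U, X_{⌈nU⌉}) with U ~ Unif[0,1], satisfy a large deviation principle at speed n on 𝒯ℳ with the good rate function D(·|ρ). -/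
open MeasureTheory Filter Set
open scoped ENNReal NNReal

noncomputable section

/-- The uniform probability measure on `[0,1]`. -/
def unif01 : Measure ℝ := volume.restrict (Set.Icc 0 1)

instance : IsProbabilityMeasure unif01 :=
  ⟨by rw [unif01, Measure.restrict_apply_univ, Real.volume_Icc]; norm_num⟩

/-- The `L^r` norm (`r : ℝ≥0∞`) of a kernel, viewed as a function on `[0,1]²`. -/
def kerNorm (W : ℝ → ℝ → ℝ) (r : ℝ≥0∞) : ℝ≥0∞ :=
  eLpNorm (fun z : ℝ × ℝ => W z.1 z.2) r (unif01.prod unif01)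

/-- The (strong) cut distance `d_□` between two kernels on `[0,1]²`. -/
def cutDist (W₁ W₂ : ℝ → ℝ → ℝ) : ℝ :=
  ⨆ S : {S : Set ℝ // MeasurableSet S}, ⨆ T : {T : Set ℝ // MeasurableSet T},
    |∫ x in Set.Icc (0:ℝ) 1 ∩ S.1, ∫ y in Set.Icc (0:ℝ) 1 ∩ T.1, (W₁ x y - W₂ x y)|

/-- A Lebesgue-measure-preserving bijection of `[0,1]`. -/
def MPB (σ : ℝ → ℝ) : Prop :=
  Set.BijOn σ (Set.Icc 0 1) (Set.Icc 0 1) ∧ MeasurePreserving σ unif01 unif01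

/-- The weak cut distance `δ_□`. -/
def weakCutDist (W₁ W₂ : ℝ → ℝ → ℝ) : ℝ :=
  ⨅ σ : {σ : ℝ → ℝ // MPB σ}, cutDist (fun x y => W₁ (σ.1 x) (σ.1 y)) W₂

/-- The step kernel `W_{Q_n}` associated to an `n × n` matrix `Q`:
it equals `Q i j` when `⌈n x⌉ = i, ⌈n y⌉ = j`. -/
def stepKernel (n : ℕ) (Q : Fin n → Fin n → ℝ) : ℝ → ℝ → ℝ := fun x y =>
  ∑ i : Fin n, ∑ j : Fin n,
    if x ∈ Set.Ioc (((i : ℕ) : ℝ)/n) ((((i : ℕ) : ℝ)+1)/n) ∧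
       y ∈ Set.Ioc (((j : ℕ) : ℝ)/n) ((((j : ℕ) : ℝ)+1)/n)
    then Q i j else 0

/-- Product over the edges of `H` (each edge counted once) of `f a b`. -/
def edgeProd {v : ℕ} (G : SimpleGraph (Fin v)) [DecidableRel G.Adj]
    (f : Fin v → Fin v → ℝ) : ℝ :=
  ∏ p ∈ Finset.univ.filter (fun p : Fin v × Fin v => G.Adj p.1 p.2 ∧ p.1 < p.2), f p.1 p.2

/-- The number of edges `|E(H)|`. -/
def edgeCard {v : ℕ} (G : SimpleGraph (Fin v)) [DecidableRel G.Adj] : ℕ :=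
  (Finset.univ.filter (fun p : Fin v × Fin v => G.Adj p.1 p.2 ∧ p.1 < p.2)).card

/-- The inhomogeneous U-statistic `U_n(X)` (sum over distinct indices). -/
def Ustat {X : Type*} {v : ℕ} (G : SimpleGraph (Fin v)) [DecidableRel G.Adj]
    (φ : (Fin v → X) → ℝ) (n : ℕ) (Q : Fin n → Fin n → ℝ) (x : Fin n → X) : ℝ :=
  (∑ i ∈ Finset.univ.filter (fun i : Fin v → Fin n => Function.Injective i),
      φ (x ∘ i) * edgeProd G (fun a b => Q (i a) (i b))) / (n : ℝ) ^ v

/-- The inhomogeneous V-statistic `V_n(X)` (sum over all indices). -/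
def Vstat {X : Type*} {v : ℕ} (G : SimpleGraph (Fin v)) [DecidableRel G.Adj]
    (φ : (Fin v → X) → ℝ) (n : ℕ) (Q : Fin n → Fin n → ℝ) (x : Fin n → X) : ℝ :=
  (∑ i : Fin v → Fin n, φ (x ∘ i) * edgeProd G (fun a b => Q (i a) (i b))) / (n : ℝ) ^ v

open Classical in
/-- Kullback-Leibler divergence `D(ν | ρ) ∈ [0,∞]`. -/
def KLdiv {α : Type*} [MeasurableSpace α] (ν ρ : Measure α) : ℝ≥0∞ :=
  if ν ≪ ρ ∧ Integrable (llr ν ρ) ν then ENNReal.ofReal (∫ a, llr ν ρ a ∂ν) else ⊤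

open Classical in
/-- `ν` itself if it is a probability measure, junk value `0` otherwise. -/
def probOr {α : Type*} [MeasurableSpace α] (ν : Measure α) : Measure α :=
  if IsProbabilityMeasure ν then ν else 0

instance {α : Type*} [MeasurableSpace α] (ν : Measure α) : SigmaFinite (probOr ν) := by
  unfold probOr
  split_ifs with h
  · haveI := h; infer_instance
  · infer_instance

/-- `v`-fold product of a (probability) measure. -/
def piProb {α : Type*} [MeasurableSpace α] (v : ℕ) (ν : Measure α) : Measure (Fin v → α) :=
  Measure.pi fun _ => probOr ν

/-- The functional `T_{W,φ}(ν) = E[φ(B₁,…,B_v) ∏_{(a,b) ∈ E(H)} W(A_a,A_b)]`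
for `(A_a,B_a)` i.i.d. with law `ν`. -/
def TWphi {X : Type*} [MeasurableSpace X] {v : ℕ} (G : SimpleGraph (Fin v))
    [DecidableRel G.Adj] (W : ℝ → ℝ → ℝ) (φ : (Fin v → X) → ℝ)
    (ν : Measure (ℝ × X)) : ℝ :=
  ∫ z : Fin v → ℝ × X,
    φ (fun a => (z a).2) * edgeProd G (fun a b => W (z a).1 (z b).1) ∂(piProb v ν)

/-- Membership in `𝒯ℳ`: probability measures on `[0,1] × 𝒳` whose first marginal
is uniform on `[0,1]`. -/
def inTM {X : Type*} [MeasurableSpace X] (ν : Measure (ℝ × X)) : Prop :=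
  IsProbabilityMeasure ν ∧ ν.map Prod.fst = unif01

/-- The rate function `I₀(t) = inf { D(ν|ρ) : ν ∈ 𝒯ℳ, D(ν|ρ) < ∞, T_{W,φ}(ν) = t }`. -/
def rate0 {X : Type*} [MeasurableSpace X] {v : ℕ} (G : SimpleGraph (Fin v))
    [DecidableRel G.Adj] (W : ℝ → ℝ → ℝ) (φ : (Fin v → X) → ℝ) (μ : Measure X)
    (t : ℝ) : ℝ≥0∞ :=
  ⨅ ν : {ν : Measure (ℝ × X) //
      inTM ν ∧ KLdiv ν (unif01.prod μ) ≠ ⊤ ∧ TWphi G W φ ν = t},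
    KLdiv ν.1 (unif01.prod μ)

/-- Tail assumption (T): `E_μ[e^{λ ψ(X)^p}] < ∞` for all `λ > 0`; for `p = ∞`
it means `ψ` is bounded. -/
def TailCond {X : Type*} [MeasurableSpace X] (μ : Measure X) (ψ : X → ℝ)
    (p : ℝ≥0∞) : Prop :=
  if p = ⊤ then ∃ C : ℝ, ∀ x, ψ x ≤ C
  else ∀ lam : ℝ, 0 < lam →
    ∫⁻ x, ENNReal.ofReal (Real.exp (lam * ψ x ^ p.toReal)) ∂μ < ⊤

/-- A sequence of random elements `T n` defined on probability spaces `(Ω n, P n)`,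
taking values in a topological space `E`, satisfies a large deviation principle at
speed `n` with good rate function `I`. -/
def SatisfiesLDP {E : Type*} [TopologicalSpace E] {Ω : ℕ → Type*}
    [∀ n, MeasurableSpace (Ω n)] (P : ∀ n, Measure (Ω n)) (T : ∀ n, Ω n → E)
    (I : E → ℝ≥0∞) : Prop :=
  (∀ c : ℝ≥0∞, c ≠ ⊤ → IsCompact {x | I x ≤ c}) ∧
  ∀ F : Set E, MeasurableSet[borel E] F →
    (-(⨅ x ∈ interior F, (I x : EReal)) ≤
      Filter.atTop.liminf fun n : ℕ =>
        (((n : ℝ)⁻¹ : ℝ) : EReal) * ENNReal.log (P n {ω | T n ω ∈ F})) ∧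
    (Filter.atTop.limsup (fun n : ℕ =>
        (((n : ℝ)⁻¹ : ℝ) : EReal) * ENNReal.log (P n {ω | T n ω ∈ F})) ≤
      -(⨅ x ∈ closure F, (I x : EReal)))

end
/-- The bivariate empirical measure `𝔏_n = (1/n) Σ_{i=1}^n δ_{(i/n, X_i)}`. -/
noncomputable def empMeas {X : Type*} [MeasurableSpace X] (n : ℕ) (x : Fin n → X) :
    Measure (ℝ × X) :=
  (n : ℝ≥0∞)⁻¹ • ∑ i : Fin n, Measure.dirac ((((i : ℕ) : ℝ) + 1) / n, x i)

open Classical in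
/-- Bundle a measure as a probability measure, with a default value in the junk case. -/
noncomputable def toProb {α : Type*} [MeasurableSpace α] (d : ProbabilityMeasure α)
    (ν : Measure α) : ProbabilityMeasure α :=
  if h : IsProbabilityMeasure ν then ⟨ν, h⟩ else d

/-- `ρ = Unif[0,1] ⊗ μ` as a probability measure. -/
noncomputable def rhoP {X : Type*} [MeasurableSpace X] (μ : Measure X)
    [IsProbabilityMeasure μ] : ProbabilityMeasure (ℝ × X) :=
  ⟨unif01.prod μ, inferInstance⟩

/-- The bounded-Lipschitz distance `d_l` between two measures on `[0,1] × 𝒳`. -/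
noncomputable def dBL {X : Type*} [MeasurableSpace X] [MetricSpace X]
    (ν₁ ν₂ : Measure (ℝ × X)) : ℝ :=
  ⨆ f : {f : ℝ × X → ℝ // LipschitzWith 1 f ∧ ∀ z, f z ∈ Set.Icc (-1 : ℝ) 1},
    |∫ z, f.1 z ∂ν₁ - ∫ z, f.1 z ∂ν₂|

/-- Distance from a measure to a set of measures, in the metric `d_l`. -/
noncomputable def dBLSet {X : Type*} [MeasurableSpace X] [MetricSpace X]
    (ν : Measure (ℝ × X)) (F : Set (Measure (ℝ × X))) : ℝ :=
  ⨅ σ : F, dBL ν σ.1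

/-- The set `F_θ` of maximizers of `ν ↦ θ T_{W,φ}(ν) − D(ν|ρ)` over
`{ν ∈ 𝒯ℳ : D(ν|ρ) < ∞}`. -/
def Fset {X : Type*} [MeasurableSpace X] {v : ℕ} (G : SimpleGraph (Fin v))
    [DecidableRel G.Adj] (W : ℝ → ℝ → ℝ) (φ : (Fin v → X) → ℝ) (μ : Measure X)
    (θ : ℝ) : Set (Measure (ℝ × X)) :=
  {ν | inTM ν ∧ KLdiv ν (unif01.prod μ) ≠ ⊤ ∧
    ∀ σ : Measure (ℝ × X), inTM σ → KLdiv σ (unif01.prod μ) ≠ ⊤ →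
      θ * TWphi G W φ σ - (KLdiv σ (unif01.prod μ)).toReal ≤
        θ * TWphi G W φ ν - (KLdiv ν (unif01.prod μ)).toReal}

open Classical in
/-- The rate function `I_θ(ν) = D(ν|ρ) − θ T_{W,φ}(ν) − inf_σ {D(σ|ρ) − θ T_{W,φ}(σ)}`,
extended by `+∞` outside `{ν ∈ 𝒯ℳ : D(ν|ρ) < ∞}`. -/
noncomputable def Itheta {X : Type*} [MeasurableSpace X] {v : ℕ}
    (G : SimpleGraph (Fin v)) [DecidableRel G.Adj] (W : ℝ → ℝ → ℝ)
    (φ : (Fin v → X) → ℝ) (μ : Measure X) (θ : ℝ) (ν : Measure (ℝ × X)) : ℝ≥0∞ :=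
  if inTM ν ∧ KLdiv ν (unif01.prod μ) ≠ ⊤ then
    ENNReal.ofReal ((KLdiv ν (unif01.prod μ)).toReal - θ * TWphi G W φ ν -
      sInf {z : ℝ | ∃ σ : Measure (ℝ × X), inTM σ ∧ KLdiv σ (unif01.prod μ) ≠ ⊤ ∧
        z = (KLdiv σ (unif01.prod μ)).toReal - θ * TWphi G W φ σ})
  else ⊤
open Classical in
/-- The rate function of part (i): `D(ν|ρ)` on `𝒯ℳ` and `+∞` elsewhere. -/
noncomputable def sanovRate {X : Type*} [MeasurableSpace X] (μ : Measure X)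
    (ν : Measure (ℝ × X)) : ℝ≥0∞ :=
  if inTM ν then KLdiv ν (unif01.prod μ) else ⊤

/-- The random element `𝔏̃_n ∈ 𝒯ℳ`: the law of `(U, X_{⌈nU⌉})` given `X`,
where `U ~ Unif[0,1]` (junk default for `n = 0`). -/
noncomputable def tildeL {X : Type*} [MeasurableSpace X] (n : ℕ) (x : Fin n → X)
    (d : Measure (ℝ × X)) : Measure (ℝ × X) :=
  if h : 0 < n then
    unif01.map (fun u => (u, x ⟨min (n - 1) (⌈u * n⌉₊ - 1), by omega⟩))
  else d

open Classical in
/-- Bundle a measure as an element of `𝒯ℳ`, with a default for the junk case. -/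
noncomputable def toTMsub {X : Type*} [MeasurableSpace X]
    (d : {ν : ProbabilityMeasure (ℝ × X) // ν.toMeasure.map Prod.fst = unif01})
    (ν : Measure (ℝ × X)) :
    {ν : ProbabilityMeasure (ℝ × X) // ν.toMeasure.map Prod.fst = unif01} :=
  if h : IsProbabilityMeasure ν ∧ ν.map Prod.fst = unif01 then ⟨⟨ν, h.1⟩, h.2⟩ else d

/-- `ρ = Unif[0,1] ⊗ μ` as an element of `𝒯ℳ`. -/
noncomputable def rhoTM {X : Type*} [MeasurableSpace X] (μ : Measure X)
    [IsProbabilityMeasure μ] :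
    {ν : ProbabilityMeasure (ℝ × X) // ν.toMeasure.map Prod.fst = unif01} :=
  ⟨rhoP μ, by
    show (unif01.prod μ).map Prod.fst = unif01
    rw [Measure.map_fst_prod]; simp⟩

open MeasureTheory Filter Set
open scoped ENNReal NNReal

theorem scaled_log_exp (n : ℕ) (hn : 0 < n) (a : ℝ) :
    (((n : ℝ)⁻¹ : ℝ) : EReal) * ENNReal.log (ENNReal.ofReal (Real.exp (-(n * a)))) = ((-a : ℝ) : EReal) := by
  have h : ENNReal.log (ENNReal.ofReal (Real.exp (-(n * a)))) = ((-(n * a) : ℝ) : EReal) := by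
    rw [ENNReal.log_ofReal]
    simp [(Real.exp_pos _).not_ge]
  rw [h, ← EReal.coe_mul]
  congr 1
  have : (n : ℝ) ≠ 0 := by positivity
  field_simp

theorem ldp_of_local {E : Type*} [TopologicalSpace E] [T2Space E] {Ω : ℕ → Type*}
    [∀ n, MeasurableSpace (Ω n)] (P : ∀ n, Measure (Ω n)) [∀ n, IsProbabilityMeasure (P n)]
    (T : ∀ n, Ω n → E) (I : E → ℝ≥0∞)
    (LU : ∀ ν, ∀ a : ℝ≥0, (a : ℝ≥0∞) < I ν → ∃ V ∈ nhds ν, ∀ᶠ n in atTop,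
      P n {ω | T n ω ∈ V} ≤ ENNReal.ofReal (Real.exp (-(n * a))))
    (LL : ∀ ν, I ν ≠ ⊤ → ∀ V ∈ nhds ν, ∀ ε : ℝ, 0 < ε → ∀ᶠ n : ℕ in atTop,
      ENNReal.ofReal (Real.exp (-(n * ((I ν).toReal + ε)))) ≤ P n {ω | T n ω ∈ V})
    (ET : ∀ M : ℝ≥0, ∃ K : Set E, IsCompact K ∧ ∀ᶠ n in atTop,
      P n {ω | T n ω ∉ K} ≤ ENNReal.ofReal (Real.exp (-(n * M)))) :
    SatisfiesLDP P T I := by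
  -- comparison of the local bounds
  have key : ∀ ν, I ν ≠ ⊤ → ∀ V ∈ nhds ν, ∀ a : ℝ≥0, I ν < a →
      ¬ ∀ᶠ n : ℕ in atTop, P n {ω | T n ω ∈ V} ≤ ENNReal.ofReal (Real.exp (-(n * a))) := by
    intro ν hν V hV a ha h
    have ha' : (I ν).toReal < a := by
      rw [← ENNReal.toReal_lt_toReal hν ENNReal.coe_ne_top] at ha; simpa using ha
    have h2 := LL ν hν V hV ((a - (I ν).toReal) / 2) (by linarith)
    obtain ⟨n, h1, h2, h3⟩ := (h.and (h2.and (eventually_gt_atTop 0))).exists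
    have h4 := h2.trans h1
    rw [ENNReal.ofReal_le_ofReal_iff (Real.exp_pos _).le, Real.exp_le_exp] at h4
    have : (0:ℝ) < n := by exact_mod_cast h3
    nlinarith
  refine ⟨?_, ?_⟩
  · intro c hc
    lift c to ℝ≥0 using hc
    obtain ⟨K, hK, hKn⟩ := ET (c + 1)
    refine hK.of_isClosed_subset ?_ ?_
    · rw [← isOpen_compl_iff, isOpen_iff_mem_nhds]
      intro ν hν
      have hν : (c : ℝ≥0∞) < I ν := by simpa using hν
      obtain ⟨a, ha1, ha2⟩ := ENNReal.lt_iff_exists_nnreal_btwn.1 hν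
      obtain ⟨V, hV, hVn⟩ := LU ν a ha2
      rw [← mem_interior_iff_mem_nhds] at hV
      filter_upwards [isOpen_interior.mem_nhds hV] with ν' hν'
      intro hc'
      have hc' : I ν' ≤ c := hc'
      exact key ν' (ne_top_of_le_ne_top ENNReal.coe_ne_top hc') V
        (mem_interior_iff_mem_nhds.1 hν') a (hc'.trans_lt ha1) hVn
    · intro ν hν
      have hν : I ν ≤ c := hν
      by_contra hνK
      refine key ν (ne_top_of_le_ne_top ENNReal.coe_ne_top hν) Kᶜ
        (hK.isClosed.isOpen_compl.mem_nhds hνK) (c+1) (hν.trans_lt ?_) hKn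
      exact_mod_cast lt_add_one c
  · intro F _
    constructor
    · rw [EReal.neg_le]
      refine le_iInf₂ fun ν hν => ?_
      rw [EReal.neg_le]
      by_cases htop : I ν = ⊤
      · simp [htop]
      refine EReal.ge_of_forall_gt_iff_ge.1 fun z hz => ?_
      have hI : ((I ν : ℝ≥0∞) : EReal) = (((I ν).toReal : ℝ) : EReal) := by
        exact (EReal.coe_ennreal_toReal htop).symm
      have hz' : (I ν).toReal < -z := by
        rw [hI, ← EReal.coe_neg, EReal.coe_lt_coe_iff] at hz
        linarith
      have h2 := LL ν htop F (mem_interior_iff_mem_nhds.1 hν) (-z - (I ν).toReal) (by linarith)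
      refine le_liminf_of_le (by isBoundedDefault) ?_
      filter_upwards [h2, eventually_gt_atTop 0] with n hn h0
      have h3 := scaled_log_exp n h0 (-z)
      rw [neg_neg] at h3
      rw [← h3]
      have h4 : (I ν).toReal + (-z - (I ν).toReal) = -z := by ring
      rw [h4] at hn
      gcongr
    · rw [EReal.le_neg]
      refine EReal.ge_of_forall_gt_iff_ge.1 fun z hz => ?_
      rw [EReal.le_neg]
      refine limsup_le_of_le (by isBoundedDefault) ?_
      rcases le_or_gt z 0 with h0 | h0
      · refine Eventually.of_forall fun n => ?_
        have h1 : ENNReal.log (P n {ω | T n ω ∈ F}) ≤ 0 := by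
          rw [ENNReal.log_le_zero_iff]; exact prob_le_one
        calc _ ≤ (((n : ℝ)⁻¹ : ℝ) : EReal) * 0 := by
                gcongr
          _ = 0 := by simp
          _ ≤ _ := by
            rw [← EReal.coe_neg]
            exact_mod_cast neg_nonneg.2 h0
      · obtain ⟨m, hm1, hm2⟩ := EReal.lt_iff_exists_real_btwn.1 hz
        have hzm : z < m := by exact_mod_cast hm1
        lift m to ℝ≥0 using (h0.trans hzm).le
        have hm : ∀ ν ∈ closure F, (m : ℝ≥0∞) < I ν := by
          intro ν hν
          have := hm2.trans_le (iInf₂_le ν hν)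
          have h' : (((m : ℝ≥0∞) : EReal)) < (I ν : EReal) := this
          exact EReal.coe_ennreal_lt_coe_ennreal_iff.1 h'
        obtain ⟨K, hK, hKn⟩ := ET m
        have hcov : ∃ C : ℝ≥0, ∀ᶠ n : ℕ in atTop, P n {ω | T n ω ∈ K ∩ closure F} ≤
            C * ENNReal.ofReal (Real.exp (-(n * m))) := by
          refine (hK.inter_right isClosed_closure).induction_on
            (p := fun S => ∃ C : ℝ≥0, ∀ᶠ n : ℕ in atTop, P n {ω | T n ω ∈ S} ≤
            C * ENNReal.ofReal (Real.exp (-(n * m)))) ?_ ?_ ?_ ?_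
          · exact ⟨0, Eventually.of_forall fun n => by simp⟩
          · rintro s t hst ⟨C, hC⟩
            refine ⟨C, hC.mono fun n hn => le_trans (measure_mono fun x hx => hst hx) hn⟩
          · rintro s t ⟨C, hC⟩ ⟨D, hD⟩
            refine ⟨C + D, ?_⟩
            filter_upwards [hC, hD] with n h1 h2
            refine (measure_union_le {ω | T n ω ∈ s} {ω | T n ω ∈ t}).trans ?_
            rw [ENNReal.coe_add, add_mul]
            exact add_le_add h1 h2
          · rintro ν ⟨-, hν⟩
            obtain ⟨V, hV, hVn⟩ := LU ν m (hm ν hν)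
            exact ⟨V, mem_nhdsWithin_of_mem_nhds hV, 1, by simpa using hVn⟩
        obtain ⟨C, hC⟩ := hcov
        have hlim : ∀ᶠ n : ℕ in atTop, (C + 1 : ℝ) ≤ Real.exp (n * (m - z)) := by
          have : Tendsto (fun n : ℕ => Real.exp (n * (m - z))) atTop atTop :=
            Real.tendsto_exp_atTop.comp (tendsto_natCast_atTop_atTop.atTop_mul_const (by linarith))
          exact this.eventually_ge_atTop _
        filter_upwards [hC, hKn, hlim, eventually_gt_atTop 0] with n h1 h2 h3 h4
        have h5 : P n {ω | T n ω ∈ F} ≤ ENNReal.ofReal (Real.exp (-(n * z))) := by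
          calc P n {ω | T n ω ∈ F} ≤ P n ({ω | T n ω ∈ K ∩ closure F} ∪ {ω | T n ω ∉ K}) := by
                refine measure_mono fun ω hω => ?_
                by_cases hk : T n ω ∈ K
                · exact Or.inl ⟨hk, subset_closure hω⟩
                · exact Or.inr hk
            _ ≤ C * ENNReal.ofReal (Real.exp (-(n * m))) + ENNReal.ofReal (Real.exp (-(n * m))) :=
                (measure_union_le _ _).trans (add_le_add h1 h2)
            _ = ENNReal.ofReal ((C + 1) * Real.exp (-(n * m))) := by
                rw [ENNReal.ofReal_mul (by positivity), ENNReal.ofReal_add (by positivity) (by positivity)]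
                simp [add_mul]
            _ ≤ _ := by
                refine ENNReal.ofReal_le_ofReal ?_
                calc (C + 1) * Real.exp (-(n * m)) ≤ Real.exp (n * (m - z)) * Real.exp (-(n * m)) := by
                      gcongr
                  _ = _ := by rw [← Real.exp_add]; ring_nf
        rw [← EReal.coe_neg, ← scaled_log_exp n h4 z]
        gcongr

theorem ldp_subtype {E : Type*} [TopologicalSpace E] (p : E → Prop) {Ω : ℕ → Type*}
    [∀ n, MeasurableSpace (Ω n)] (P : ∀ n, Measure (Ω n)) (T : ∀ n, Ω n → {x // p x})
    (I : E → ℝ≥0∞) (hI : ∀ x, ¬ p x → I x = ⊤)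
    (h : SatisfiesLDP P (fun n ω => (T n ω : E)) I) :
    SatisfiesLDP P T (fun x => I x.1) := by
  refine ⟨fun c hc => ?_, fun F _ => ⟨?_, ?_⟩⟩
  · rw [Topology.IsEmbedding.subtypeVal.isCompact_iff]
    convert h.1 c hc using 1
    ext x
    constructor
    · rintro ⟨y, hy, rfl⟩; exact hy
    · intro hx
      by_cases hp : p x
      · exact ⟨⟨x, hp⟩, hx, rfl⟩
      · exact absurd (le_antisymm le_top ((hI x hp).symm.le.trans hx)).symm (Ne.symm hc)
  · obtain ⟨G, hG, hGF⟩ := isOpen_induced_iff.1 (isOpen_interior (s := F))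
    have h1 := (h.2 G (MeasurableSpace.measurableSet_generateFrom hG)).1
    rw [hG.interior_eq] at h1
    refine le_trans ?_ (h1.trans ?_)
    · rw [EReal.neg_le_neg_iff]
      refine le_iInf₂ fun x hx => iInf₂_le x.1 ?_
      rw [← hGF] at hx; exact hx
    · refine liminf_le_liminf (Eventually.of_forall fun n => ?_)
      dsimp only
      gcongr
      intro hx
      exact interior_subset (s := F) (hGF ▸ hx)
  · have hcl := fun x => closure_subtype (s := F) (x := x)
    have h1 := (h.2 (closure (Set.image Subtype.val F)) (by
      let _ : MeasurableSpace E := borel E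
      have : BorelSpace E := ⟨rfl⟩
      exact isClosed_closure.measurableSet)).2
    rw [closure_closure] at h1
    refine le_trans ?_ (h1.trans ?_)
    · refine limsup_le_limsup (Eventually.of_forall fun n => ?_)
      dsimp only
      gcongr
      intro hx
      exact subset_closure ⟨_, hx, rfl⟩
    · rw [EReal.neg_le_neg_iff]
      refine le_iInf₂ fun x hx => ?_
      by_cases hp : p x
      · exact iInf₂_le (⟨x, hp⟩ : {x // p x}) ((hcl _).2 hx)
      · simp [hI x hp]

open MeasureTheory Filter Set
open scoped ENNReal NNReal

theorem integrable_bdd {α : Type*} [MeasurableSpace α] {m : Measure α} [IsFiniteMeasure m]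
    {f : α → ℝ} (hf : Measurable f) {C : ℝ} (hC : ∀ x, |f x| ≤ C) : Integrable f m :=
  Integrable.of_bound hf.aestronglyMeasurable C (Eventually.of_forall fun x => by
    rw [Real.norm_eq_abs]; exact hC x)

theorem integrable_exp_bdd {α : Type*} [MeasurableSpace α] {m : Measure α} [IsFiniteMeasure m]
    {f : α → ℝ} (hf : Measurable f) {C : ℝ} (hC : ∀ x, |f x| ≤ C) :
    Integrable (fun x => Real.exp (f x)) m :=
  integrable_bdd (Real.measurable_exp.comp hf) (C := Real.exp C) fun x => by
    rw [abs_of_pos (Real.exp_pos _)]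
    exact Real.exp_le_exp.2 ((le_abs_self _).trans (hC x))

theorem KLdiv_eq_klDiv {α : Type*} [MeasurableSpace α] (ν ρ : Measure α)
    [IsProbabilityMeasure ν] [IsProbabilityMeasure ρ] :
    KLdiv ν ρ = InformationTheory.klDiv ν ρ := by
  unfold KLdiv
  split_ifs with h
  · rw [InformationTheory.klDiv_of_ac_of_integrable h.1 h.2]; simp
  · by_contra h'
    exact h (InformationTheory.klDiv_ne_top_iff.1 (Ne.symm h'))

theorem kl_young (r t : ℝ) (hr : 0 ≤ r) :
    r * t ≤ InformationTheory.klFun r + Real.exp t - 1 := by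
  rw [InformationTheory.klFun_apply]
  rcases hr.eq_or_lt with rfl | hr
  · simp [(Real.exp_pos t).le]
  · have h := Real.add_one_le_exp (t - Real.log r)
    rw [Real.exp_sub, Real.exp_log hr, le_div_iff₀ hr] at h
    nlinarith

/-- Easy half of the variational formula. -/
theorem kl_upper {α : Type*} [MeasurableSpace α] (ν ρ : Measure α)
    [IsProbabilityMeasure ν] [IsProbabilityMeasure ρ] (hkl : KLdiv ν ρ ≠ ⊤)
    {f : α → ℝ} (hf : Measurable f) {C : ℝ} (hC : ∀ x, |f x| ≤ C) :
    ∫ x, f x ∂ν ≤ (KLdiv ν ρ).toReal + ∫ x, Real.exp (f x) ∂ρ - 1 := by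
  rw [KLdiv_eq_klDiv] at *
  obtain ⟨hac, hintg⟩ := InformationTheory.klDiv_ne_top_iff.1 hkl
  rw [InformationTheory.toReal_klDiv_eq_integral_klFun hac, ← integral_rnDeriv_smul hac]
  have hk := (InformationTheory.integrable_klFun_rnDeriv_iff hac).2 hintg
  have he : Integrable (fun x => Real.exp (f x)) ρ := integrable_exp_bdd hf hC
  have h1 : ∫ x, (ν.rnDeriv ρ x).toReal • f x ∂ρ ≤
      ∫ x, (InformationTheory.klFun (ν.rnDeriv ρ x).toReal + Real.exp (f x) - 1) ∂ρ := by
    refine integral_mono ?_ ((hk.add he).sub (integrable_const 1)) fun x => ?_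
    · exact (integrable_rnDeriv_smul_iff hac).2 (integrable_bdd hf hC)
    · exact kl_young _ _ ENNReal.toReal_nonneg
  refine h1.trans_eq ?_
  have e1 := integral_sub (hk.add he) (integrable_const (1:ℝ))
  have e2 := integral_add hk he
  simp only [Pi.add_apply] at e1
  rw [e1, e2]
  simp

theorem exp_aux (r t : ℝ) (h : (0 ≤ t ∧ Real.exp t ≤ r) ∨ (t ≤ 0 ∧ r ≤ Real.exp t)) :
    0 ≤ r * t - Real.exp t + 1 := by
  have h1 := Real.add_one_le_exp (-t)
  have h2 : Real.exp t * Real.exp (-t) = 1 := by rw [← Real.exp_add]; simp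
  have h3 : Real.exp t * (-t + 1) ≤ 1 := by
    exact (mul_le_mul_of_nonneg_left h1 (Real.exp_pos _).le).trans_eq h2
  rcases h with ⟨h, h'⟩ | ⟨h, h'⟩ <;> nlinarith

/-- truncated logarithm -/
noncomputable def truncLog (k : ℕ) (r : ℝ) : ℝ :=
  if r = 0 then -(k : ℝ) else max (-(k : ℝ)) (min k (Real.log r))

theorem truncLog_abs (k : ℕ) (r : ℝ) : |truncLog k r| ≤ k := by
  have : (0:ℝ) ≤ k := by positivity
  unfold truncLog
  split_ifs with h
  · simp
  · rw [abs_le]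
    exact ⟨le_max_left _ _, max_le (by linarith) (min_le_left _ _)⟩

theorem measurable_truncLog (k : ℕ) : Measurable (truncLog k) := by
  unfold truncLog
  refine Measurable.ite (measurableSet_singleton 0) measurable_const ?_
  exact measurable_const.max (measurable_const.min Real.measurable_log)

theorem truncLog_nonneg (k : ℕ) (r : ℝ) (hr : 0 ≤ r) :
    0 ≤ r * truncLog k r - Real.exp (truncLog k r) + 1 := by
  have hk : (0:ℝ) ≤ k := by positivity
  apply exp_aux
  unfold truncLog
  rcases hr.eq_or_lt with rfl | hr
  · right; simp [(Real.exp_pos _).le]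
  · rw [if_neg hr.ne']
    rcases le_total 0 (Real.log r) with h | h
    · left
      have h0 : 0 ≤ min (k:ℝ) (Real.log r) := le_min hk h
      rw [max_eq_right (by linarith)]
      refine ⟨h0, ?_⟩
      calc _ ≤ Real.exp (Real.log r) := Real.exp_le_exp.2 (min_le_right _ _)
        _ = r := Real.exp_log hr
    · right
      rw [min_eq_right (by linarith)]
      refine ⟨max_le (by linarith) h, ?_⟩
      calc r = Real.exp (Real.log r) := (Real.exp_log hr).symm
        _ ≤ _ := Real.exp_le_exp.2 (le_max_right _ _)

theorem truncLog_tendsto (r : ℝ) (hr : 0 ≤ r) :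
    Tendsto (fun k : ℕ => r * truncLog k r - Real.exp (truncLog k r) + 1) atTop
      (nhds (InformationTheory.klFun r)) := by
  rw [InformationTheory.klFun_apply]
  rcases hr.eq_or_lt with rfl | hr
  · simp only [truncLog, if_true, zero_mul, zero_sub]
    have : Tendsto (fun k : ℕ => Real.exp (-(k:ℝ))) atTop (nhds 0) :=
      Real.tendsto_exp_neg_atTop_nhds_zero.comp tendsto_natCast_atTop_atTop
    simpa using this.neg.add_const 1
  · refine tendsto_const_nhds.congr' ?_
    filter_upwards [(tendsto_natCast_atTop_atTop (R := ℝ)).eventually_ge_atTop |Real.log r|] with k hk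
    have : truncLog k r = Real.log r := by
      unfold truncLog
      rw [if_neg hr.ne', min_eq_right ((le_abs_self _).trans hk), max_eq_right]
      linarith [neg_abs_le (Real.log r)]
    rw [this, Real.exp_log hr]; ring

/-- Hard half of the variational formula, measurable test functions. -/
theorem kl_lower_meas {α : Type*} [MeasurableSpace α] (ν ρ : Measure α)
    [IsProbabilityMeasure ν] [IsProbabilityMeasure ρ] (a : ℝ≥0)
    (h : ∀ f : α → ℝ, Measurable f → ∀ C : ℝ, (∀ x, |f x| ≤ C) →
      ∫ x, f x ∂ν - ∫ x, Real.exp (f x) ∂ρ + 1 ≤ a) : KLdiv ν ρ ≤ a := by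
  rw [KLdiv_eq_klDiv]
  have hac : ν ≪ ρ := by
    refine Measure.AbsolutelyContinuous.mk fun s hs hs0 => ?_
    by_contra hne
    have hpos : 0 < ν.real s := ENNReal.toReal_pos hne (measure_ne_top _ _)
    obtain ⟨t, ht⟩ := exists_nat_gt (a / ν.real s)
    have h1 := h (s.indicator fun _ => (t:ℝ)) (measurable_const.indicator hs) t (fun x => by
      by_cases hx : x ∈ s <;> simp [hx])
    have h2 : ∫ x, Real.exp (s.indicator (fun _ => (t:ℝ)) x) ∂ρ = 1 := by
      have : (fun x => Real.exp (s.indicator (fun _ => (t:ℝ)) x)) =ᵐ[ρ] fun _ => (1:ℝ) := by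
        have hsc : ∀ᵐ x ∂ρ, x ∉ s := measure_eq_zero_iff_ae_notMem.1 hs0
        filter_upwards [hsc] with x hx
        simp [hx]
      rw [integral_congr_ae this]; simp
    rw [h2, integral_indicator_const _ hs, smul_eq_mul] at h1
    rw [div_lt_iff₀ hpos] at ht
    linarith
  rw [InformationTheory.klDiv_eq_lintegral_klFun_of_ac hac]
  set r : α → ℝ := fun x => (ν.rnDeriv ρ x).toReal with hr
  have hrm : Measurable r := (Measure.measurable_rnDeriv _ _).ennreal_toReal
  have hr0 : ∀ x, 0 ≤ r x := fun x => ENNReal.toReal_nonneg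
  set φ : ℕ → α → ℝ := fun k x => r x * truncLog k (r x) - Real.exp (truncLog k (r x)) + 1 with hφ
  have hφ0 : ∀ k x, 0 ≤ φ k x := fun k x => truncLog_nonneg k _ (hr0 x)
  have htm : ∀ k, Measurable fun x => truncLog k (r x) := fun k => (measurable_truncLog k).comp hrm
  have hφm : ∀ k, Measurable (φ k) := fun k =>
    ((hrm.mul (htm k)).sub (Real.measurable_exp.comp (htm k))).add_const 1
  have hb : ∀ k, ∫⁻ x, ENNReal.ofReal (φ k x) ∂ρ ≤ a := by
    intro k
    have hi1 : Integrable (fun x => r x * truncLog k (r x)) ρ :=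
      (integrable_rnDeriv_smul_iff hac).2 (integrable_bdd (htm k) (fun x => truncLog_abs k _))
    have hi2 : Integrable (fun x => Real.exp (truncLog k (r x))) ρ :=
      integrable_exp_bdd (htm k) (fun x => truncLog_abs k _)
    have hi : Integrable (φ k) ρ := (hi1.sub hi2).add (integrable_const 1)
    rw [← ofReal_integral_eq_lintegral_ofReal hi (Eventually.of_forall (hφ0 k))]
    have h1 := h _ (htm k) k (fun x => truncLog_abs k _)
    rw [← integral_rnDeriv_smul hac] at h1
    have h2 : ∫ x, φ k x ∂ρ ≤ a := by
      refine le_trans (le_of_eq ?_) h1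
      simp only [hφ]
      have e1 := integral_add (hi1.sub hi2) (integrable_const (1:ℝ))
      have e2 := integral_sub hi1 hi2
      simp only [Pi.sub_apply] at e1
      rw [e1, e2]
      simp [hr]
    calc _ ≤ ENNReal.ofReal (a:ℝ) := ENNReal.ofReal_le_ofReal h2
      _ = a := by simp
  calc ∫⁻ x, ENNReal.ofReal (InformationTheory.klFun (r x)) ∂ρ
      = ∫⁻ x, liminf (fun k => ENNReal.ofReal (φ k x)) atTop ∂ρ := by
        refine lintegral_congr fun x => ?_
        exact ((ENNReal.continuous_ofReal.tendsto _).comp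
          (truncLog_tendsto (r x) (hr0 x))).liminf_eq.symm
    _ ≤ liminf (fun k => ∫⁻ x, ENNReal.ofReal (φ k x) ∂ρ) atTop :=
        lintegral_liminf_le fun k => (hφm k).ennreal_ofReal
    _ ≤ a := by
        refine liminf_le_of_frequently_le' (Frequently.of_forall hb)

open scoped BoundedContinuousFunction in
/-- Hard half of the variational formula, bounded continuous test functions. -/
theorem kl_lower {α : Type*} [MeasurableSpace α] [TopologicalSpace α] [PolishSpace α] [BorelSpace α]
    (ν ρ : Measure α)
    [IsProbabilityMeasure ν] [IsProbabilityMeasure ρ] (a : ℝ≥0) (ha : a < KLdiv ν ρ) :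
    ∃ f : α →ᵇ ℝ, (a : ℝ) < ∫ x, f x ∂ν - ∫ x, Real.exp (f x) ∂ρ + 1 := by
  by_contra! hcon
  refine ha.not_ge (kl_lower_meas ν ρ a fun f hf C hC => ?_)
  refine le_of_forall_pos_le_add fun ε hε => ?_
  have hexp := Real.exp_pos C
  obtain ⟨g, hg, hgi⟩ := (integrable_bdd (m := ν + ρ) hf hC).exists_boundedContinuous_integral_sub_le
    (ε := ε / (1 + Real.exp C)) (by positivity)
  have hC0 : ∀ x : α, 0 ≤ C := fun x => (abs_nonneg _).trans (hC x)
  let g' : α →ᵇ ℝ := BoundedContinuousFunction.ofNormedAddCommGroup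
    (fun x => max (-|C|) (min |C| (g x))) (by fun_prop) |C| (fun x => by
      rw [Real.norm_eq_abs, abs_le]
      exact ⟨le_max_left _ _, max_le (by linarith [abs_nonneg C]) (min_le_left _ _)⟩)
  have hg'C : ∀ x, |g' x| ≤ C := fun x => by
    rw [← abs_of_nonneg (hC0 x), ← Real.norm_eq_abs, abs_of_nonneg (hC0 x)]
    have : |g' x| ≤ |C| := by
      rw [abs_le]
      exact ⟨le_max_left _ _, max_le (by linarith [abs_nonneg C]) (min_le_left _ _)⟩
    rwa [abs_of_nonneg (hC0 x)] at this
  have hd : ∀ x, |f x - g' x| ≤ ‖f x - g x‖ := fun x => by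
    have hx := abs_le.1 (hC x)
    have hCx := hC0 x
    have : f x = max (-|C|) (min |C| (f x)) := by
      rw [abs_of_nonneg hCx, min_eq_right hx.2, max_eq_right hx.1]
    rw [Real.norm_eq_abs]
    conv_lhs => rw [this]
    show |max (-|C|) (min |C| (f x)) - max (-|C|) (min |C| (g x))| ≤ _
    refine (abs_max_sub_max_le_max _ _ _ _).trans ?_
    refine max_le (by simp) ((abs_min_sub_min_le_max _ _ _ _).trans ?_)
    simp
  have hdi : Integrable (fun x => ‖f x - g x‖) (ν + ρ) :=
    ((integrable_bdd hf hC).sub hgi).norm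
  rw [integrable_add_measure] at hdi
  rw [integral_add_measure hdi.1 hdi.2] at hg
  have hg'm : Measurable g' := g'.continuous.measurable
  have h1 : ∫ x, f x ∂ν ≤ ∫ x, g' x ∂ν + ∫ x, ‖f x - g x‖ ∂ν := by
    rw [← integral_add (integrable_bdd hg'm hg'C) hdi.1]
    refine integral_mono (integrable_bdd hf hC) ((integrable_bdd hg'm hg'C).add hdi.1) fun x => ?_
    have := (le_abs_self _).trans (hd x)
    simp only
    linarith
  have h2 : ∫ x, Real.exp (g' x) ∂ρ ≤ ∫ x, Real.exp (f x) ∂ρ + Real.exp C * ∫ x, ‖f x - g x‖ ∂ρ := by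
    rw [← integral_const_mul, ← integral_add (integrable_exp_bdd hf hC) (hdi.2.const_mul _)]
    refine integral_mono (integrable_exp_bdd hg'm hg'C)
      ((integrable_exp_bdd hf hC).add (hdi.2.const_mul _)) fun x => ?_
    have h3 := (neg_abs_le _).trans' (neg_le_neg (hd x))
    have h4 := Real.add_one_le_exp (f x - g' x)
    have h5 : Real.exp (f x) = Real.exp (g' x) * Real.exp (f x - g' x) := by
      rw [← Real.exp_add]; ring_nf
    have h6 : Real.exp (g' x) ≤ Real.exp C := Real.exp_le_exp.2 ((le_abs_self _).trans (hg'C x))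
    have h7 := Real.exp_pos (g' x)
    simp only
    have h8 : Real.exp (g' x) * (f x - g' x + 1) ≤ Real.exp (f x) := by
      rw [h5]; exact mul_le_mul_of_nonneg_left h4 h7.le
    have h9 : Real.exp (g' x) * (-‖f x - g x‖) ≤ Real.exp (g' x) * (f x - g' x) :=
      mul_le_mul_of_nonneg_left h3 h7.le
    have h10 : Real.exp (g' x) * ‖f x - g x‖ ≤ Real.exp C * ‖f x - g x‖ :=
      mul_le_mul_of_nonneg_right h6 (norm_nonneg _)
    linarith
  have h3 := hcon g'
  have hA : 0 ≤ ∫ x, ‖f x - g x‖ ∂ν := integral_nonneg fun _ => norm_nonneg _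
  have hB : 0 ≤ ∫ x, ‖f x - g x‖ ∂ρ := integral_nonneg fun _ => norm_nonneg _
  rw [le_div_iff₀ (by positivity)] at hg
  nlinarith [mul_nonneg hA hexp.le]

open MeasureTheory Filter Set
open scoped ENNReal NNReal

/-- entropy bound in variational form -/
def EntB {α : Type*} [MeasurableSpace α] (Q P : Measure α) (d : ℝ) : Prop :=
  ∀ h : α → ℝ, Measurable h → ∀ C : ℝ, (∀ x, |h x| ≤ C) →
    ∫ x, h x ∂Q ≤ d + Real.log (∫ x, Real.exp (h x) ∂P)

theorem integral_exp_bounds {α : Type*} [MeasurableSpace α] (P : Measure α)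
    [IsProbabilityMeasure P] {h : α → ℝ} (hm : Measurable h) {C : ℝ} (hC : ∀ x, |h x| ≤ C) :
    Real.exp (-C) ≤ ∫ x, Real.exp (h x) ∂P ∧ ∫ x, Real.exp (h x) ∂P ≤ Real.exp C := by
  have hi := integrable_exp_bdd (m := P) hm hC
  constructor
  · have := integral_mono (μ := P) (integrable_const (Real.exp (-C))) hi
      (fun x => Real.exp_le_exp.2 (by linarith [neg_abs_le (h x), hC x]))
    simpa using this
  · have := integral_mono (μ := P) hi (integrable_const (Real.exp C))
      (fun x => Real.exp_le_exp.2 (by linarith [le_abs_self (h x), hC x]))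
    simpa using this

theorem EntB.prod {α β : Type*} [MeasurableSpace α] [MeasurableSpace β] {Q₁ P₁ : Measure α}
    {Q₂ P₂ : Measure β} [IsProbabilityMeasure Q₁] [IsProbabilityMeasure P₁]
    [IsProbabilityMeasure Q₂] [IsProbabilityMeasure P₂] {d₁ d₂ : ℝ}
    (h₁ : EntB Q₁ P₁ d₁) (h₂ : EntB Q₂ P₂ d₂) : EntB (Q₁.prod Q₂) (P₁.prod P₂) (d₁ + d₂) := by
  intro h hm C hC
  have hb : ∀ x, Real.exp (-C) ≤ ∫ y, Real.exp (h (x, y)) ∂P₂ ∧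
      ∫ y, Real.exp (h (x, y)) ∂P₂ ≤ Real.exp C := fun x =>
    integral_exp_bounds P₂ (hm.comp measurable_prodMk_left) (fun y => hC _)
  set L : α → ℝ := fun x => Real.log (∫ y, Real.exp (h (x, y)) ∂P₂) with hL
  have hexpm : Measurable fun z => Real.exp (h z) := Real.measurable_exp.comp hm
  have hLm : Measurable L := Real.measurable_log.comp
    (StronglyMeasurable.integral_prod_right' (ν := P₂) hexpm.stronglyMeasurable).measurable
  have hpos : ∀ x, 0 < ∫ y, Real.exp (h (x, y)) ∂P₂ := fun x => (Real.exp_pos _).trans_le (hb x).1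
  have hLb : ∀ x, |L x| ≤ C := fun x => by
    rw [abs_le]
    exact ⟨(Real.le_log_iff_exp_le (hpos x)).2 (hb x).1, (Real.log_le_iff_le_exp (hpos x)).2 (hb x).2⟩
  have e1 := h₁ L hLm C hLb
  have e2 : ∫ x, Real.exp (L x) ∂P₁ = ∫ z, Real.exp (h z) ∂(P₁.prod P₂) := by
    rw [integral_prod _ (integrable_exp_bdd hm hC)]
    refine integral_congr_ae (Eventually.of_forall fun x => ?_)
    exact Real.exp_log (hpos x)
  rw [e2] at e1
  have hi : Integrable h (Q₁.prod Q₂) := integrable_bdd hm hC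
  rw [integral_prod _ hi]
  have e3 : ∫ x, ∫ y, h (x, y) ∂Q₂ ∂Q₁ ≤ ∫ x, (d₂ + L x) ∂Q₁ := by
    refine integral_mono hi.integral_prod_left
      ((integrable_const _).add (integrable_bdd hLm hLb)) fun x => ?_
    exact h₂ (fun y => h (x, y)) (hm.comp measurable_prodMk_left) C (fun y => hC _)
  rw [integral_add (integrable_const _) (integrable_bdd hLm hLb)] at e3
  simp only [integral_const, probReal_univ, one_smul] at e3
  linarith

theorem EntB.of_equiv {α β : Type*} [MeasurableSpace α] [MeasurableSpace β] {Q P : Measure α}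
    {Q' P' : Measure β} (e : α ≃ᵐ β) (hQ : MeasurePreserving e Q Q') (hP : MeasurePreserving e P P')
    {d : ℝ} (h : EntB Q' P' d) : EntB Q P d := by
  intro f hf C hC
  have := h (fun y => f (e.symm y)) (hf.comp e.symm.measurable) C (fun y => hC _)
  rw [← hQ.integral_comp', ← hP.integral_comp'] at this
  simpa using this

theorem EntB.pi {α : Type*} [MeasurableSpace α] : ∀ {n : ℕ} {Q P : Fin n → Measure α}
    [∀ i, IsProbabilityMeasure (Q i)] [∀ i, IsProbabilityMeasure (P i)] {d : Fin n → ℝ}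
    (_ : ∀ i, EntB (Q i) (P i) (d i)), EntB (Measure.pi Q) (Measure.pi P) (∑ i, d i)
  | 0, Q, P, _, _, d, _ => by
    intro f hf C hC
    have : ∀ x, f x = f default := fun x => by rw [Subsingleton.elim x default]
    simp_rw [this]
    simp
  | n + 1, Q, P, _, _, d, h => by
    rw [Fin.sum_univ_succ]
    refine EntB.of_equiv (MeasurableEquiv.piFinSuccAbove (fun _ => α) 0)
      (measurePreserving_piFinSuccAbove Q 0) (measurePreserving_piFinSuccAbove P 0) ?_
    exact (h 0).prod (EntB.pi fun i => h i.succ)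

theorem EntB.set {α : Type*} [MeasurableSpace α] {Q P : Measure α} [IsProbabilityMeasure Q]
    [IsProbabilityMeasure P] {d : ℝ} (h : EntB Q P d) {A : Set α} (hA : MeasurableSet A) {t : ℝ}
    (ht : 0 ≤ t) : t * Q.real A ≤ d + Real.exp t * P.real A := by
  have h1 := h (A.indicator fun _ => t) (measurable_const.indicator hA) t (fun x => by
    by_cases hx : x ∈ A <;> simp [hx, ht, abs_of_nonneg])
  rw [integral_indicator_const _ hA, smul_eq_mul] at h1
  have h2 : ∫ x, Real.exp (A.indicator (fun _ => t) x) ∂P = 1 + (Real.exp t - 1) * P.real A := by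
    have : (fun x => Real.exp (A.indicator (fun _ => t) x)) =
        fun x => 1 + A.indicator (fun _ => Real.exp t - 1) x := by
      ext x; by_cases hx : x ∈ A <;> simp [hx]
    rw [this, integral_add (integrable_const _) ((integrable_const _).indicator hA),
      integral_indicator_const _ hA]
    simp [mul_comm]
  rw [h2] at h1
  have hP : 0 ≤ P.real A := measureReal_nonneg
  have hpos : 0 < 1 + (Real.exp t - 1) * P.real A := by
    have := Real.one_le_exp ht
    nlinarith
  have := Real.log_le_sub_one_of_pos hpos
  nlinarith

theorem exists_sup_split {n : ℕ} {H : Type*} (φ : Fin n → H → ℝ) (h0 : H) (hz : ∀ i, φ i h0 = 0)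
    (C : ℝ) (hC : ∀ h : Fin n → H, ∑ i, φ i (h i) ≤ C) :
    ∃ d : Fin n → ℝ, (∀ i h, φ i h ≤ d i) ∧ ∑ i, d i ≤ C := by
  classical
  have hb : ∀ i, BddAbove (range (φ i)) := fun i => ⟨C, by
    rintro _ ⟨h, rfl⟩
    refine le_trans (le_of_eq ?_) (hC (Function.update (fun _ => h0) i h))
    rw [Finset.sum_eq_single i]
    · simp
    · intro j _ hj; simp [Function.update_of_ne hj, hz]
    · simp⟩
  refine ⟨fun i => ⨆ h, φ i h, fun i h => le_ciSup (hb i) h, ?_⟩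
  refine le_of_forall_pos_le_add fun ε hε => ?_
  have hn : (0:ℝ) < n + 1 := by positivity
  have : Nonempty H := ⟨h0⟩
  have : ∀ i, ∃ h, (⨆ h, φ i h) - ε / (n + 1) < φ i h := fun i =>
    exists_lt_of_lt_ciSup (by have : 0 < ε / (n+1) := by positivity
                              linarith)
  choose h hh using this
  have h1 : ∑ i, ((⨆ h, φ i h) - ε / (n + 1)) ≤ ∑ i, φ i (h i) :=
    Finset.sum_le_sum fun i _ => (hh i).le
  rw [Finset.sum_sub_distrib] at h1
  simp only [Finset.sum_const, Finset.card_univ, Fintype.card_fin, nsmul_eq_mul] at h1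
  have h2 : n * (ε / (n + 1)) ≤ ε := by
    rw [mul_div_assoc', div_le_iff₀ hn]; nlinarith
  linarith [hC h]

open MeasureTheory Filter Set
open scoped ENNReal NNReal

/-- cell index of `u` -/
noncomputable def cidx (n : ℕ) (hn : 0 < n) (u : ℝ) : Fin n :=
  ⟨min (n - 1) (⌈u * n⌉₊ - 1), by omega⟩

theorem measurable_cidx (n : ℕ) (hn : 0 < n) : Measurable (cidx n hn) := by
  have h1 : Measurable fun u : ℝ => ⌈u * n⌉₊ := Nat.measurable_ceil.comp (measurable_id.mul_const _)
  have h2 : Measurable fun k : ℕ => (⟨min (n - 1) (k - 1), by omega⟩ : Fin n) := measurable_from_top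
  exact h2.comp h1

theorem cidx_eq_iff (n : ℕ) (hn : 0 < n) (u : ℝ) (hu : u ∈ Ioc (0:ℝ) 1) (i : Fin n) :
    cidx n hn u = i ↔ u ∈ Ioc (((i : ℕ) : ℝ)/n) ((((i : ℕ) : ℝ)+1)/n) := by
  have hn' : (0:ℝ) < n := by exact_mod_cast hn
  have hpos : 0 < u * n := mul_pos hu.1 hn'
  have hle : u * n ≤ n := by nlinarith [hu.2]
  have hc1 : 0 < ⌈u * n⌉₊ := Nat.ceil_pos.2 hpos
  have hc2 : ⌈u * n⌉₊ ≤ n := Nat.ceil_le.2 hle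
  rw [mem_Ioc, div_lt_iff₀ hn', le_div_iff₀ hn', Fin.ext_iff]
  have : (cidx n hn u : ℕ) = ⌈u * n⌉₊ - 1 := by
    show min (n-1) (⌈u * n⌉₊ - 1) = _
    omega
  rw [this, ← Nat.lt_ceil]
  have h3 : u * n ≤ (i:ℕ) + 1 ↔ ⌈u * n⌉₊ ≤ i + 1 := by
    rw [Nat.ceil_le]; push_cast; rfl
  rw [h3]; omega

theorem unif01_eq : unif01 = volume.restrict (Ioc (0:ℝ) 1) := by
  rw [unif01]; exact (Measure.restrict_congr_set Ioc_ae_eq_Icc).symm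

theorem unif01_ae : ∀ᵐ u ∂unif01, u ∈ Ioc (0:ℝ) 1 := by
  rw [unif01_eq]; exact ae_restrict_mem measurableSet_Ioc

theorem cell_subset (n : ℕ) (hn : 0 < n) (i : Fin n) :
    Ioc (((i : ℕ) : ℝ)/n) ((((i : ℕ) : ℝ)+1)/n) ⊆ Ioc 0 1 := by
  have hn' : (0:ℝ) < n := by exact_mod_cast hn
  apply Ioc_subset_Ioc (by positivity)
  rw [div_le_one hn']; exact_mod_cast i.2

theorem unif01_restrict_cell (n : ℕ) (hn : 0 < n) (i : Fin n) :
    unif01.restrict (cidx n hn ⁻¹' {i}) =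
      volume.restrict (Ioc (((i : ℕ) : ℝ)/n) ((((i : ℕ) : ℝ)+1)/n)) := by
  rw [unif01_eq, Measure.restrict_restrict (measurable_cidx n hn (measurableSet_singleton i))]
  congr 1
  ext u
  constructor
  · rintro ⟨h1, h2⟩; exact (cidx_eq_iff n hn u h2 i).1 h1
  · intro h; exact ⟨(cidx_eq_iff n hn u (cell_subset n hn i h) i).2 h, cell_subset n hn i h⟩

theorem vol_cell (n : ℕ) (hn : 0 < n) (i : Fin n) :
    volume (Ioc (((i : ℕ) : ℝ)/n) ((((i : ℕ) : ℝ)+1)/n)) = (n : ℝ≥0∞)⁻¹ := by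
  have hn' : (0:ℝ) < n := by exact_mod_cast hn
  rw [Real.volume_Ioc, ← sub_div, add_sub_cancel_left, one_div, ENNReal.ofReal_inv_of_pos hn',
    ENNReal.ofReal_natCast]

theorem unif01_cell (n : ℕ) (hn : 0 < n) (i : Fin n) :
    unif01 (cidx n hn ⁻¹' {i}) = (n : ℝ≥0∞)⁻¹ := by
  rw [← Measure.restrict_apply_univ, unif01_restrict_cell, Measure.restrict_apply_univ,
    vol_cell n hn]

/-- conditional law of the second coordinate on a cell -/
noncomputable def ncell {X : Type*} [MeasurableSpace X] (n : ℕ) (hn : 0 < n)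
    (ν : Measure (ℝ × X)) (i : Fin n) : Measure X :=
  (n : ℝ≥0∞) • (ν.restrict (Prod.fst ⁻¹' (cidx n hn ⁻¹' {i}))).map Prod.snd

theorem nmul_inv (n : ℕ) (hn : 0 < n) : (n : ℝ≥0∞) * (n : ℝ≥0∞)⁻¹ = 1 :=
  ENNReal.mul_inv_cancel (by exact_mod_cast hn.ne') (ENNReal.natCast_ne_top n)

theorem ncell_prob {X : Type*} [MeasurableSpace X] (n : ℕ) (hn : 0 < n)
    (ν : Measure (ℝ × X)) (hν : inTM ν) (i : Fin n) : IsProbabilityMeasure (ncell n hn ν i) := by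
  constructor
  have hm := measurable_cidx n hn (measurableSet_singleton i)
  rw [ncell, Measure.smul_apply, Measure.map_apply measurable_snd MeasurableSet.univ, preimage_univ,
    Measure.restrict_apply_univ, ← Measure.map_apply measurable_fst hm, hν.2,
    unif01_cell, smul_eq_mul, nmul_inv n hn]

theorem ncell_rho {X : Type*} [MeasurableSpace X] (n : ℕ) (hn : 0 < n)
    (μ : Measure X) [IsProbabilityMeasure μ] (i : Fin n) : ncell n hn (unif01.prod μ) i = μ := by
  have e : Prod.fst ⁻¹' (cidx n hn ⁻¹' {i}) = (cidx n hn ⁻¹' {i}) ×ˢ (univ : Set X) := by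
    ext; simp
  rw [ncell, e, ← Measure.prod_restrict, Measure.map_snd_prod, Measure.restrict_apply_univ,
    unif01_cell, Measure.restrict_univ, smul_smul, nmul_inv n hn, one_smul]

theorem inTM_rho {X : Type*} [MeasurableSpace X] (μ : Measure X) [IsProbabilityMeasure μ] :
    inTM (unif01.prod μ) := ⟨inferInstance, by rw [Measure.map_fst_prod]; simp⟩

theorem disint {X : Type*} [MeasurableSpace X] (n : ℕ) (hn : 0 < n)
    (ν : Measure (ℝ × X)) (hν : inTM ν) (G : Fin n → X → ℝ) (hG : ∀ i, Measurable (G i)) (C : ℝ)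
    (hC : ∀ i x, |G i x| ≤ C) :
    ∫ z, G (cidx n hn z.1) z.2 ∂ν = (n:ℝ)⁻¹ * ∑ i, ∫ x, G i x ∂(ncell n hn ν i) := by
  have := hν.1
  have hS : ∀ i, MeasurableSet ((Prod.fst : ℝ × X → ℝ) ⁻¹' (cidx n hn ⁻¹' {i})) := fun i =>
    measurable_fst (measurable_cidx n hn (measurableSet_singleton i))
  have e1 : ∀ z : ℝ × X, G (cidx n hn z.1) z.2 =
      ∑ i, (Prod.fst ⁻¹' (cidx n hn ⁻¹' {i})).indicator (fun z : ℝ × X => G i z.2) z := by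
    intro z
    rw [Finset.sum_eq_single (cidx n hn z.1)]
    · rw [indicator_of_mem]; simp
    · intro j _ hj
      rw [indicator_of_notMem]; simpa using fun h => hj h.symm
    · simp
  have hGi : ∀ i, Integrable (fun z : ℝ × X => G i z.2) ν := fun i =>
    integrable_bdd ((hG i).comp measurable_snd) (fun z => hC i z.2)
  simp_rw [e1]
  rw [integral_finsetSum _ (fun i _ => (hGi i).indicator (hS i)), Finset.mul_sum]
  refine Finset.sum_congr rfl fun i _ => ?_
  rw [integral_indicator (hS i), ncell, integral_smul_measure, ENNReal.toReal_natCast,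
    integral_map measurable_snd.aemeasurable (hG i).aestronglyMeasurable, smul_eq_mul, ← mul_assoc,
    inv_mul_cancel₀ (by exact_mod_cast hn.ne'), one_mul]

theorem measurable_cell_fun {X : Type*} [MeasurableSpace X] (n : ℕ) (hn : 0 < n)
    (G : Fin n → X → ℝ) (hG : ∀ i, Measurable (G i)) :
    Measurable fun z : ℝ × X => G (cidx n hn z.1) z.2 := by
  have h : Measurable fun p : Fin n × X => G p.1 p.2 := measurable_from_prod_countable_right hG
  exact h.comp (((measurable_cidx n hn).comp measurable_fst).prodMk measurable_snd)

theorem cell_kl {X : Type*} [MeasurableSpace X] (n : ℕ) (hn : 0 < n) (μ : Measure X)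
    [IsProbabilityMeasure μ]
    (ν : Measure (ℝ × X)) (hν : inTM ν) (hkl : KLdiv ν (unif01.prod μ) ≠ ⊤)
    (h : Fin n → X → ℝ) (hh : ∀ i, Measurable (h i)) (hC : ∀ i, ∃ C : ℝ, ∀ x, |h i x| ≤ C) :
    ∑ i, (∫ x, h i x ∂(ncell n hn ν i) - Real.log (∫ x, Real.exp (h i x) ∂μ)) ≤
      n * (KLdiv ν (unif01.prod μ)).toReal := by
  have := hν.1
  have hn' : (0:ℝ) < n := by exact_mod_cast hn
  choose C hC using hC
  set c : Fin n → ℝ := fun i => Real.log (∫ x, Real.exp (h i x) ∂μ) with hc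
  set B : ℝ := ∑ i, (|C i| + |c i|) with hB
  have hb : ∀ i x, |h i x - c i| ≤ B := fun i x => by
    calc |h i x - c i| ≤ |h i x| + |c i| := abs_sub _ _
      _ ≤ |C i| + |c i| := by linarith [hC i x, le_abs_self (C i)]
      _ ≤ B := Finset.single_le_sum (f := fun i => |C i| + |c i|) (fun i _ => by positivity)
        (Finset.mem_univ i)
  have hm : ∀ i, Measurable fun x => h i x - c i := fun i => (hh i).sub_const _
  have k := kl_upper ν (unif01.prod μ) hkl (measurable_cell_fun n hn (fun i x => h i x - c i) hm)
    (C := B) (fun z => hb _ _)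
  rw [disint n hn ν hν (fun i x => h i x - c i) hm B hb] at k
  have e2 := disint n hn (unif01.prod μ) (inTM_rho μ) (fun i x => Real.exp (h i x - c i))
    (fun i => (hm i).exp) (Real.exp B) (fun i x => by
      rw [abs_of_pos (Real.exp_pos _)]
      exact Real.exp_le_exp.2 ((le_abs_self _).trans (hb i x)))
  have e3 : ∀ i, ∫ x, Real.exp (h i x - c i) ∂(ncell n hn (unif01.prod μ) i) = 1 := fun i => by
    rw [ncell_rho]
    simp_rw [Real.exp_sub]
    have hp : 0 < ∫ x, Real.exp (h i x) ∂μ :=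
      (Real.exp_pos _).trans_le (integral_exp_bounds μ (hh i) (hC i)).1
    rw [integral_div, hc, Real.exp_log hp, div_self hp.ne']
  simp_rw [e3] at e2
  simp only [Finset.sum_const, Finset.card_univ, Fintype.card_fin, nsmul_eq_mul, mul_one] at e2
  rw [inv_mul_cancel₀ hn'.ne'] at e2
  rw [e2] at k
  have e4 : ∀ i, ∫ x, (h i x - c i) ∂(ncell n hn ν i) = ∫ x, h i x ∂(ncell n hn ν i) - c i := by
    intro i
    have := ncell_prob n hn ν hν i
    rw [integral_sub (integrable_bdd (hh i) (hC i)) (integrable_const _)]; simp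
  simp_rw [e4] at k
  rw [add_sub_cancel_right, inv_mul_le_iff₀ hn'] at k
  exact k

theorem entB_cells {X : Type*} [MeasurableSpace X] (n : ℕ) (hn : 0 < n) (μ : Measure X)
    [IsProbabilityMeasure μ]
    (ν : Measure (ℝ × X)) (hν : inTM ν) (hkl : KLdiv ν (unif01.prod μ) ≠ ⊤) :
    EntB (Measure.pi (ncell n hn ν)) (Measure.pi fun _ => μ)
      (n * (KLdiv ν (unif01.prod μ)).toReal) := by
  have := fun i => ncell_prob n hn ν hν i
  obtain ⟨d, hd, hs⟩ := exists_sup_split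
    (H := {h : X → ℝ // Measurable h ∧ ∃ C : ℝ, ∀ x, |h x| ≤ C})
    (fun i h => ∫ x, h.1 x ∂(ncell n hn ν i) - Real.log (∫ x, Real.exp (h.1 x) ∂μ))
    ⟨fun _ => 0, measurable_const, 0, by simp⟩ (by simp) (n * (KLdiv ν (unif01.prod μ)).toReal)
    (fun h => cell_kl n hn μ ν hν hkl (fun i => (h i).1) (fun i => (h i).2.1) (fun i => (h i).2.2))
  have h1 : EntB (Measure.pi (ncell n hn ν)) (Measure.pi fun _ => μ) (∑ i, d i) :=
    EntB.pi fun i h hm C hC => by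
      have := hd i ⟨h, hm, C, hC⟩
      simp only at this
      linarith
  intro h hm C hC
  linarith [h1 h hm C hC]

open MeasureTheory Filter Set
open scoped ENNReal NNReal

/-- time-smoothing kernels: probability measures supported on the cells -/
structure CellKer (κ : ∀ n : ℕ, Fin n → Measure ℝ) : Prop where
  prob : ∀ n i, IsProbabilityMeasure (κ n i)
  supp : ∀ n, 0 < n → ∀ i : Fin n,
    ∀ᵐ u ∂(κ n i), u ∈ Icc (((i : ℕ) : ℝ)/n) ((((i : ℕ) : ℝ)+1)/n)

/-- smoothing of `f` in time over a cell -/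
noncomputable def smo {X : Type*} (κ : ∀ n : ℕ, Fin n → Measure ℝ) (f : ℝ × X → ℝ) (n : ℕ)
    (i : Fin n) (x : X) : ℝ := ∫ u, f (u, x) ∂(κ n i)

section
variable {X : Type*} [MeasurableSpace X] {κ : ∀ n : ℕ, Fin n → Measure ℝ}

theorem smo_meas (hκ : CellKer κ) {f : ℝ × X → ℝ} (hf : Measurable f) (n : ℕ) (i : Fin n) :
    Measurable (smo κ f n i) := by
  have := hκ.prob
  exact (StronglyMeasurable.integral_prod_left' (μ := κ n i) hf.stronglyMeasurable).measurable

theorem smo_bdd (hκ : CellKer κ) {f : ℝ × X → ℝ} {C : ℝ} (hC : ∀ z, |f z| ≤ C) (n : ℕ)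
    (i : Fin n) (x : X) : |smo κ f n i x| ≤ C := by
  have := hκ.prob
  have := norm_integral_le_of_norm_le_const (μ := κ n i) (f := fun u => f (u, x)) (C := C)
    (Eventually.of_forall fun u => hC _)
  simpa [smo] using this

theorem smo_exp (hκ : CellKer κ) {f : ℝ × X → ℝ} (hf : Measurable f) {C : ℝ}
    (hC : ∀ z, |f z| ≤ C) (n : ℕ) (i : Fin n) (x : X) :
    Real.exp (smo κ f n i x) ≤ smo κ (fun z => Real.exp (f z)) n i x := by
  have := hκ.prob
  have hm : Measurable fun u => f (u, x) := hf.comp measurable_prodMk_right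
  exact ConvexOn.map_integral_le (μ := κ n i) (s := univ) (g := Real.exp) (f := fun u => f (u, x))
    convexOn_exp Real.continuous_exp.continuousOn isClosed_univ (by simp)
    (integrable_bdd hm fun u => hC _) (integrable_exp_bdd hm fun u => hC _)

theorem integral_T (hκ : CellKer κ) {f : ℝ × X → ℝ} (hf : Measurable f) {C : ℝ}
    (hC : ∀ z, |f z| ≤ C) (n : ℕ) (x : Fin n → X) (τ : Measure (ℝ × X))
    (hτ : τ = (n : ℝ≥0∞)⁻¹ • ∑ i, (κ n i).prod (Measure.dirac (x i))) :
    ∫ z, f z ∂τ = (n : ℝ)⁻¹ * ∑ i, smo κ f n i (x i) := by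
  have := hκ.prob
  rw [hτ, integral_smul_measure, integral_finsetSum_measure (fun i _ => integrable_bdd hf hC)]
  simp only [ENNReal.toReal_inv, ENNReal.toReal_natCast, smul_eq_mul]
  congr 1
  refine Finset.sum_congr rfl fun i _ => ?_
  rw [integral_prod _ (integrable_bdd hf hC)]
  refine integral_congr_ae (Eventually.of_forall fun u => ?_)
  exact integral_dirac' _ _ (hf.comp measurable_prodMk_left).stronglyMeasurable

/-- mean lemma -/
theorem mean_tendsto [TopologicalSpace X] [PolishSpace X] [BorelSpace X] (hκ : CellKer κ)
    {f : ℝ × X → ℝ} (hf : Continuous f) {C : ℝ}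
    (hC : ∀ z, |f z| ≤ C) (ν : Measure (ℝ × X)) (hν : inTM ν) {ε : ℝ} (hε : 0 < ε) :
    ∀ᶠ n : ℕ in atTop, ∀ hn : 0 < n,
      |(n : ℝ)⁻¹ * ∑ i, ∫ x, smo κ f n i x ∂(ncell n hn ν i) - ∫ z, f z ∂ν| < ε := by
  have := hκ.prob
  have := hν.1
  have key : Tendsto (fun n : ℕ => ∫ z, (if hn : 0 < n then smo κ f n (cidx n hn z.1) z.2 else 0) ∂ν)
      atTop (nhds (∫ z, f z ∂ν)) := by
    have hC0 : ∀ z : ℝ × X, 0 ≤ C := fun z => (abs_nonneg _).trans (hC z)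
    refine tendsto_integral_of_dominated_convergence (fun _ => C) (fun n => ?_)
      (integrable_const _) (fun n => ?_) ?_
    · split_ifs with hn
      · exact (measurable_cell_fun n hn _ (smo_meas hκ hf.measurable n)).aestronglyMeasurable
      · exact aestronglyMeasurable_const
    · refine Eventually.of_forall fun z => ?_
      split_ifs with hn
      · exact smo_bdd hκ hC _ _ _
      · simpa using hC0 z
    · have hae : ∀ᵐ z ∂ν, z.1 ∈ Ioc (0:ℝ) 1 := by
        have h := unif01_ae
        rw [← hν.2] at h
        exact ae_of_ae_map measurable_fst.aemeasurable h
      filter_upwards [hae] with z hz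
      rw [Metric.tendsto_atTop]
      intro δ hδ
      have hc : Continuous fun v : ℝ => f (v, z.2) := hf.comp (by fun_prop)
      obtain ⟨η, hη, hη'⟩ := Metric.continuous_iff.1 hc z.1 (δ/2) (by positivity)
      obtain ⟨N, hN⟩ := exists_nat_gt (1/η)
      refine ⟨N + 1, fun n hn => ?_⟩
      have hn0 : 0 < n := by omega
      have hn' : (0:ℝ) < n := by exact_mod_cast hn0
      have hNn : (N:ℝ) < n := by exact_mod_cast hn
      rw [dif_pos hn0]
      set i := cidx n hn0 z.1 with hi
      have hzi := (cidx_eq_iff n hn0 z.1 hz i).1 hi.symm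
      have hm : Measurable fun v => f (v, z.2) := hc.measurable
      have e : smo κ f n i z.2 - f z = ∫ v, (f (v, z.2) - f (z.1, z.2)) ∂(κ n i) := by
        rw [integral_sub (integrable_bdd hm fun u => hC _) (integrable_const _)]
        simp [smo]
      rw [Real.dist_eq, e]
      have := norm_integral_le_of_norm_le_const (μ := κ n i)
        (f := fun v => f (v, z.2) - f (z.1, z.2)) (C := δ/2) (by
          filter_upwards [hκ.supp n hn0 i] with v hv
          refine (hη' v ?_).le
          rw [Real.dist_eq, abs_lt]
          have h1 : (((i:ℕ):ℝ) + 1)/n = (i:ℕ)/n + 1/n := add_div _ _ _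
          have h2 : 1/(n:ℝ) < η := by
            rw [div_lt_iff₀ hn']
            rw [div_lt_iff₀ hη] at hN
            nlinarith
          have h3 := hzi.1
          have h4 := hzi.2
          have h5 := hv.1
          have h6 := hv.2
          rw [h1] at h4 h6
          constructor <;> linarith)
      simp only [Real.norm_eq_abs, probReal_univ, mul_one] at this
      linarith
  rw [Metric.tendsto_nhds] at key
  filter_upwards [key ε hε] with n hn h0
  simp only [dif_pos h0, Real.dist_eq] at hn
  rwa [disint n h0 ν hν (smo κ f n) (smo_meas hκ hf.measurable n) C (smo_bdd hκ hC n)] at hn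

theorem chernoff {n : ℕ} (μ : Measure X) [IsProbabilityMeasure μ] (G : Fin n → X → ℝ)
    (hG : ∀ i, Measurable (G i)) {C : ℝ} (hC : ∀ i x, |G i x| ≤ C) (s : ℝ) :
    (Measure.pi fun _ : Fin n => μ) {x | s ≤ ∑ i, G i (x i)} ≤
      ENNReal.ofReal (Real.exp (-s) * ∏ i, ∫ x, Real.exp (G i x) ∂μ) := by
  have hm : Measurable fun x : Fin n → X => ∑ i, G i (x i) :=
    Finset.measurable_sum _ fun i _ => (hG i).comp (measurable_pi_apply i)
  have hb : ∀ x : Fin n → X, |1 * ∑ i, G i (x i)| ≤ n * C := fun x => by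
    rw [one_mul]
    refine (Finset.abs_sum_le_sum_abs _ _).trans ?_
    refine (Finset.sum_le_sum fun i _ => hC i (x i)).trans ?_
    simp
  have h := ProbabilityTheory.measure_ge_le_exp_mul_mgf (μ := Measure.pi fun _ : Fin n => μ)
    (X := fun x : Fin n → X => ∑ i, G i (x i)) (t := 1) s zero_le_one
    (integrable_exp_bdd (hm.const_mul 1) hb)
  rw [ProbabilityTheory.mgf] at h
  simp only [one_mul, Real.exp_sum] at h
  rw [integral_fintype_prod_eq_prod (fun i x => Real.exp (G i x))] at h
  rw [← ofReal_measureReal]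
  apply ENNReal.ofReal_le_ofReal
  simpa using h

end

open MeasureTheory Filter Set
open scoped ENNReal NNReal

section
variable {X : Type*} [MeasurableSpace X] [TopologicalSpace X] [PolishSpace X] [BorelSpace X]
  {κ : ∀ n : ℕ, Fin n → Measure ℝ}

theorem bcf_abs {α : Type*} [TopologicalSpace α] (f : BoundedContinuousFunction α ℝ) (x : α) :
    |f x| ≤ ‖f‖ := f.norm_coe_le_norm x

theorem sanov_LU_tm (hκ : CellKer κ) (μ : Measure X) [IsProbabilityMeasure μ]
    (T : ∀ n : ℕ, (Fin n → X) → ProbabilityMeasure (ℝ × X))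
    (hT : ∀ n, 0 < n → ∀ x, (T n x).toMeasure =
      (n : ℝ≥0∞)⁻¹ • ∑ i, (κ n i).prod (Measure.dirac (x i)))
    (ν : ProbabilityMeasure (ℝ × X)) (a : ℝ≥0)
    (ha : (a : ℝ≥0∞) < KLdiv ν.toMeasure (unif01.prod μ)) :
    ∃ V ∈ nhds ν, ∀ᶠ n : ℕ in atTop, (Measure.pi fun _ : Fin n => μ) {x | T n x ∈ V} ≤
      ENNReal.ofReal (Real.exp (-(n * a))) := by
  obtain ⟨f, hf⟩ := kl_lower ν.toMeasure (unif01.prod μ) a ha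
  set g : ℝ × X → ℝ := fun z => Real.exp (f z) with hg
  have hgc : Continuous g := Real.continuous_exp.comp f.continuous
  have hgb : ∀ z, |g z| ≤ Real.exp ‖f‖ := fun z => by
    rw [abs_of_pos (Real.exp_pos _)]
    exact Real.exp_le_exp.2 ((le_abs_self _).trans (bcf_abs f z))
  set c : ℝ := ∫ z, g z ∂(unif01.prod μ) - 1 with hc
  set ε : ℝ := (∫ z, f z ∂ν.toMeasure - c - a) / 2 with hε
  have hε0 : 0 < ε := by simp only [hε, hc, hg]; linarith
  refine ⟨{ν' | c + a + ε < ∫ z, f z ∂ν'.toMeasure}, ?_, ?_⟩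
  · refine (isOpen_lt continuous_const
      (ProbabilityMeasure.continuous_integral_boundedContinuousFunction f)).mem_nhds ?_
    show c + a + ε < ∫ z, f z ∂ν.toMeasure
    linarith
  · filter_upwards [mean_tendsto hκ hgc hgb (unif01.prod μ) (inTM_rho μ) hε0, eventually_gt_atTop 0]
      with n hn hn0
    have hn' : (0:ℝ) < n := by exact_mod_cast hn0
    have hmean := hn hn0
    simp only [ncell_rho] at hmean
    have hfm : Measurable f := f.continuous.measurable
    refine (measure_mono (t := {x | n * (c + a + ε) ≤ ∑ i, smo κ f n i (x i)}) ?_).trans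
      ((chernoff μ (smo κ f n) (smo_meas hκ hfm n) (smo_bdd hκ (bcf_abs f) n) _).trans ?_)
    · intro x hx
      have hx' : c + a + ε < ∫ z, f z ∂(T n x).toMeasure := hx
      rw [integral_T hκ hfm (bcf_abs f) n x _ (hT n hn0 x), lt_inv_mul_iff₀ hn'] at hx'
      exact hx'.le
    · apply ENNReal.ofReal_le_ofReal
      have h1 : ∏ i : Fin n, ∫ x, Real.exp (smo κ f n i x) ∂μ ≤
          ∏ i : Fin n, Real.exp (∫ x, smo κ g n i x ∂μ - 1) := by
        refine Finset.prod_le_prod (fun i _ => integral_nonneg fun x => (Real.exp_pos _).le)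
          fun i _ => ?_
        have h2 : ∫ x, Real.exp (smo κ f n i x) ∂μ ≤ ∫ x, smo κ g n i x ∂μ :=
          integral_mono (integrable_exp_bdd (smo_meas hκ hfm n i) (smo_bdd hκ (bcf_abs f) n i))
            (integrable_bdd (smo_meas hκ hgc.measurable n i) (smo_bdd hκ hgb n i))
            (fun x => smo_exp hκ hfm (bcf_abs f) n i x)
        have h3 := Real.add_one_le_exp (∫ x, smo κ g n i x ∂μ - 1)
        linarith
      refine (mul_le_mul_of_nonneg_left h1 (Real.exp_pos _).le).trans ?_
      rw [← Real.exp_sum, ← Real.exp_add]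
      apply Real.exp_le_exp.2
      rw [Finset.sum_sub_distrib]
      simp only [Finset.sum_const, Finset.card_univ, Fintype.card_fin, nsmul_eq_mul, mul_one]
      have h4 := (abs_lt.1 hmean).2
      rw [sub_lt_iff_lt_add, inv_mul_lt_iff₀ hn'] at h4
      have h5 : ∫ z, g z ∂(unif01.prod μ) = c + 1 := by rw [hc]; ring
      rw [h5] at h4
      nlinarith

theorem sanov_LU_not (hκ : CellKer κ) (μ : Measure X) [IsProbabilityMeasure μ]
    (T : ∀ n : ℕ, (Fin n → X) → ProbabilityMeasure (ℝ × X))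
    (hT : ∀ n, 0 < n → ∀ x, (T n x).toMeasure =
      (n : ℝ≥0∞)⁻¹ • ∑ i, (κ n i).prod (Measure.dirac (x i)))
    (ν : ProbabilityMeasure (ℝ × X)) (a : ℝ≥0) (hν : ¬ inTM ν.toMeasure) :
    ∃ V ∈ nhds ν, ∀ᶠ n : ℕ in atTop, (Measure.pi fun _ : Fin n => μ) {x | T n x ∈ V} ≤
      ENNReal.ofReal (Real.exp (-(n * a))) := by
  have hne : ν.toMeasure.map Prod.fst ≠ unif01 := fun h => hν ⟨inferInstance, h⟩
  have : IsProbabilityMeasure (ν.toMeasure.map Prod.fst) :=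
    Measure.isProbabilityMeasure_map measurable_fst.aemeasurable
  obtain ⟨g, hg⟩ : ∃ g : BoundedContinuousFunction ℝ ℝ,
      ∫ u, g u ∂(ν.toMeasure.map Prod.fst) ≠ ∫ u, g u ∂unif01 := by
    by_contra! h
    exact hne (ext_of_forall_integral_eq_of_IsFiniteMeasure h)
  set f : BoundedContinuousFunction (ℝ × X) ℝ := g.compContinuous ⟨Prod.fst, continuous_fst⟩ with hf
  have hfe : ∀ z, f z = g z.1 := fun z => rfl
  rw [integral_map measurable_fst.aemeasurable g.continuous.measurable.aestronglyMeasurable,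
    ← (inTM_rho μ).2,
    integral_map measurable_fst.aemeasurable g.continuous.measurable.aestronglyMeasurable] at hg
  set L : ℝ := ∫ z, g z.1 ∂(unif01.prod μ) with hL
  have hd : 0 < |∫ z, g z.1 ∂ν.toMeasure - L| := abs_pos.2 (sub_ne_zero.2 hg)
  set ε := |∫ z, g z.1 ∂ν.toMeasure - L| / 2 with hε
  have hε0 : 0 < ε := by positivity
  refine ⟨{ν' | ε < |∫ z, f z ∂ν'.toMeasure - L|}, ?_, ?_⟩
  · refine (isOpen_lt continuous_const
      ((ProbabilityMeasure.continuous_integral_boundedContinuousFunction f).sub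
        continuous_const).abs).mem_nhds ?_
    show ε < |∫ z, g z.1 ∂ν.toMeasure - L|
    linarith
  · filter_upwards [mean_tendsto hκ f.continuous (bcf_abs f) (unif01.prod μ) (inTM_rho μ) hε0,
      eventually_gt_atTop 0] with n hn hn0
    have hmean := hn hn0
    simp only [ncell_rho] at hmean
    have : {x : Fin n → X | ε < |∫ z, f z ∂(T n x).toMeasure - L|} = ∅ := by
      rw [eq_empty_iff_forall_notMem]
      intro x hx
      have hx' : ε < |∫ z, f z ∂(T n x).toMeasure - L| := hx
      rw [integral_T hκ f.continuous.measurable (bcf_abs f) n x _ (hT n hn0 x)] at hx'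
      have e : ∀ i, ∫ y, smo κ f n i y ∂μ = smo κ f n i (x i) := fun i => by
        have : ∀ y, smo κ f n i y = smo κ f n i (x i) := fun y => rfl
        rw [integral_congr_ae (Eventually.of_forall this)]; simp
      simp_rw [e] at hmean
      exact lt_asymm hmean hx'
    refine (le_of_eq ?_).trans zero_le
    exact (congrArg _ this).trans measure_empty

theorem sanov_conc (hκ : CellKer κ)
    (T : ∀ n : ℕ, (Fin n → X) → ProbabilityMeasure (ℝ × X))
    (hT : ∀ n, 0 < n → ∀ x, (T n x).toMeasure =
      (n : ℝ≥0∞)⁻¹ • ∑ i, (κ n i).prod (Measure.dirac (x i)))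
    (ν : ProbabilityMeasure (ℝ × X)) (hν : inTM ν.toMeasure)
    (V : Set (ProbabilityMeasure (ℝ × X))) (hV : V ∈ nhds ν) (ε : ℝ≥0∞) (hε : 0 < ε) :
    ∀ᶠ n : ℕ in atTop, ∀ hn : 0 < n,
      Measure.pi (ncell n hn ν.toMeasure) {x | T n x ∉ V} ≤ ε := by
  let Fl : Filter (ProbabilityMeasure (ℝ × X)) :=
    { sets := {V | ∀ ε : ℝ≥0∞, 0 < ε → ∀ᶠ n : ℕ in atTop, ∀ hn : 0 < n,
        Measure.pi (ncell n hn ν.toMeasure) {x | T n x ∉ V} ≤ ε}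
      univ_sets := by
        intro ε hε
        filter_upwards with n hn
        simp
      sets_of_superset := by
        intro A B hA hAB ε hε
        filter_upwards [hA ε hε] with n h hn
        exact (measure_mono fun x (hx : T n x ∉ B) (hx' : T n x ∈ A) => hx (hAB hx')).trans (h hn)
      inter_sets := by
        intro A B hA hB ε hε
        filter_upwards [hA (ε/2) (ENNReal.half_pos hε.ne'), hB (ε/2) (ENNReal.half_pos hε.ne')]
          with n h1 h2 hn
        refine (measure_mono (t := {x | T n x ∉ A} ∪ {x | T n x ∉ B}) ?_).trans
          ((measure_union_le _ _).trans ((add_le_add (h1 hn) (h2 hn)).trans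
            (ENNReal.add_halves ε).le))
        intro x hx
        by_cases h : T n x ∈ A
        · exact Or.inr fun h' => hx ⟨h, h'⟩
        · exact Or.inl h }
  have hle : Tendsto id Fl (nhds ν) := by
    rw [ProbabilityMeasure.tendsto_iff_forall_integral_tendsto]
    intro f
    rw [Metric.tendsto_nhds]
    intro δ hδ
    show ∀ ε : ℝ≥0∞, 0 < ε → ∀ᶠ n : ℕ in atTop, ∀ hn : 0 < n,
        Measure.pi (ncell n hn ν.toMeasure)
          {x | ¬ dist (∫ z, f z ∂(T n x).toMeasure) (∫ z, f z ∂ν.toMeasure) < δ} ≤ ε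
    intro ε hε
    have hfm : Measurable f := f.continuous.measurable
    have hlim : Tendsto (fun n : ℕ => ENNReal.ofReal (‖f‖ ^ 2 / (δ / 2) ^ 2 * (n:ℝ)⁻¹)) atTop
        (nhds 0) := by
      have h := (tendsto_inv_atTop_nhds_zero_nat (𝕜 := ℝ)).const_mul (‖f‖ ^ 2 / (δ / 2) ^ 2)
      have h' := ENNReal.tendsto_ofReal h
      simpa using h'
    filter_upwards [mean_tendsto hκ f.continuous (bcf_abs f) ν.toMeasure hν (half_pos hδ),
      hlim.eventually_le_const hε] with n h1 h2 hn
    have hn' : (0:ℝ) < n := by exact_mod_cast hn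
    have hpr := fun i => ncell_prob n hn ν.toMeasure hν i
    have hmean := h1 hn
    have hsm := smo_meas hκ hfm n
    have hsb := smo_bdd hκ (bcf_abs f) n
    set S : (Fin n → X) → ℝ := ∑ i, fun x => smo κ f n i (x i) with hS
    have hSa : ∀ x, S x = ∑ i, smo κ f n i (x i) := fun x => by simp [hS]
    have hmem : ∀ i, MemLp (smo κ f n i) 2 (ncell n hn ν.toMeasure i) := fun i =>
      MemLp.of_bound (hsm i).aestronglyMeasurable ‖f‖ (Eventually.of_forall fun x => hsb i x)
    have hvar : ProbabilityTheory.variance S (Measure.pi (ncell n hn ν.toMeasure)) ≤ n * ‖f‖ ^ 2 := by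
      rw [hS, ProbabilityTheory.variance_sum_pi hmem]
      refine (Finset.sum_le_sum (g := fun _ => ‖f‖ ^ 2) fun i _ => ?_).trans (by simp)
      refine (ProbabilityTheory.variance_le_sq_of_bounded (a := -‖f‖) (b := ‖f‖)
        (Eventually.of_forall fun x => abs_le.1 (hsb i x)) (hsm i).aemeasurable).trans (le_of_eq ?_)
      ring
    have hSm : Measurable S := by
      have : S = fun x => ∑ i, smo κ f n i (x i) := funext hSa
      rw [this]
      exact Finset.measurable_sum _ fun i _ => (hsm i).comp (measurable_pi_apply i)
    have hSb : ∀ x, |S x| ≤ n * ‖f‖ := fun x => by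
      rw [hSa]
      refine (Finset.abs_sum_le_sum_abs _ _).trans ?_
      refine (Finset.sum_le_sum fun i _ => hsb i (x i)).trans ?_
      simp
    have hSp : MemLp S 2 (Measure.pi (ncell n hn ν.toMeasure)) :=
      MemLp.of_bound hSm.aestronglyMeasurable (n * ‖f‖) (Eventually.of_forall hSb)
    have hES : ∫ x, S x ∂(Measure.pi (ncell n hn ν.toMeasure)) =
        ∑ i, ∫ x, smo κ f n i x ∂(ncell n hn ν.toMeasure i) := by
      simp_rw [hSa]
      have hin : ∀ i ∈ Finset.univ, Integrable (fun x : Fin n → X => smo κ f n i (x i))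
          (Measure.pi (ncell n hn ν.toMeasure)) := fun i _ =>
        integrable_bdd ((hsm i).comp (measurable_pi_apply i)) (fun x => hsb i (x i))
      rw [integral_finsetSum _ hin]
      exact Finset.sum_congr rfl fun i _ => integral_comp_eval (hsm i).aestronglyMeasurable
    have hcheb := ProbabilityTheory.meas_ge_le_variance_div_sq hSp
      (c := n * (δ/2)) (by positivity)
    refine (measure_mono ?_).trans (hcheb.trans ((ENNReal.ofReal_le_ofReal ?_).trans h2))
    · intro x hx
      have hx' : δ ≤ |∫ z, f z ∂(T n x).toMeasure - ∫ z, f z ∂ν.toMeasure| := by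
        have := not_lt.1 hx
        rwa [Real.dist_eq] at this
      rw [integral_T hκ hfm (bcf_abs f) n x _ (hT n hn x), ← hSa] at hx'
      rw [← hES] at hmean
      show n * (δ/2) ≤ |S x - ∫ x, S x ∂(Measure.pi (ncell n hn ν.toMeasure))|
      set E := ∫ x, S x ∂(Measure.pi (ncell n hn ν.toMeasure))
      have h5 : δ / 2 ≤ |(n:ℝ)⁻¹ * (S x - E)| := by
        have h6 := abs_add_le ((n:ℝ)⁻¹ * (S x - E)) ((n:ℝ)⁻¹ * E - ∫ z, f z ∂ν.toMeasure)
        have h7 : (n:ℝ)⁻¹ * (S x - E) + ((n:ℝ)⁻¹ * E - ∫ z, f z ∂ν.toMeasure) =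
          (n:ℝ)⁻¹ * S x - ∫ z, f z ∂ν.toMeasure := by ring
        rw [h7] at h6
        linarith
      rw [abs_mul, abs_of_pos (inv_pos.2 hn'), le_inv_mul_iff₀ hn'] at h5
      exact h5
    · rw [div_le_iff₀ (by positivity)]
      refine hvar.trans (le_of_eq ?_)
      field_simp
  have : V ∈ Fl := hle hV
  exact this ε hε

theorem sanov_LL (hκ : CellKer κ) (μ : Measure X) [IsProbabilityMeasure μ]
    (T : ∀ n : ℕ, (Fin n → X) → ProbabilityMeasure (ℝ × X))
    (hT : ∀ n, 0 < n → ∀ x, (T n x).toMeasure =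
      (n : ℝ≥0∞)⁻¹ • ∑ i, (κ n i).prod (Measure.dirac (x i)))
    (ν : ProbabilityMeasure (ℝ × X)) (hν : inTM ν.toMeasure)
    (hkl : KLdiv ν.toMeasure (unif01.prod μ) ≠ ⊤)
    (V : Set (ProbabilityMeasure (ℝ × X))) (hV : V ∈ nhds ν) (ε : ℝ) (hε : 0 < ε) :
    ∀ᶠ n : ℕ in atTop,
      ENNReal.ofReal (Real.exp (-(n * ((KLdiv ν.toMeasure (unif01.prod μ)).toReal + ε)))) ≤
      (Measure.pi fun _ : Fin n => μ) {x | T n x ∈ V} := by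
  set D := (KLdiv ν.toMeasure (unif01.prod μ)).toReal with hD
  have hD0 : 0 ≤ D := ENNReal.toReal_nonneg
  set q : ℝ := ε / (2 * (D + ε)) with hq
  have hq0 : 0 < q := by positivity
  obtain ⟨N, hN⟩ := exists_nat_gt (2 / ε)
  filter_upwards [sanov_conc hκ T hT ν hν V hV (ENNReal.ofReal q) (ENNReal.ofReal_pos.2 hq0),
    eventually_gt_atTop 0, eventually_ge_atTop N] with n h1 hn hnN
  have hn' : (0:ℝ) < n := by exact_mod_cast hn
  have hnN' : (N:ℝ) ≤ n := by exact_mod_cast hnN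
  have hpr := fun i => ncell_prob n hn ν.toMeasure hν i
  set Q := Measure.pi (ncell n hn ν.toMeasure) with hQ
  set P := Measure.pi fun _ : Fin n => μ with hP
  have h2 : Q (toMeasurable Q {x | T n x ∉ V}) ≤ ENNReal.ofReal q := by
    rw [measure_toMeasurable]; exact h1 hn
  set A := (toMeasurable Q {x | T n x ∉ V})ᶜ with hA
  have hAm : MeasurableSet A := (measurableSet_toMeasurable _ _).compl
  have hAV : A ⊆ {x | T n x ∈ V} := by
    intro x hx
    by_contra h
    exact hx (subset_toMeasurable Q {x | T n x ∉ V} h)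
  have hQA : 1 - q ≤ Q.real A := by
    rw [hA, probReal_compl_eq_one_sub (measurableSet_toMeasurable _ _)]
    have : Q.real (toMeasurable Q {x | T n x ∉ V}) ≤ q := ENNReal.toReal_le_of_le_ofReal hq0.le h2
    linarith
  set t : ℝ := n * (D + ε) with ht
  have ht0 : 0 ≤ t := by positivity
  have h3 := (entB_cells n hn μ ν.toMeasure hν hkl).set hAm ht0
  refine le_trans ?_ (measure_mono hAV)
  rw [← ofReal_measureReal]
  apply ENNReal.ofReal_le_ofReal
  have h4 : t * q = n * ε / 2 := by
    rw [ht, hq]; field_simp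
  have h5 : 1 ≤ n * ε / 2 := by
    rw [div_lt_iff₀ hε] at hN
    nlinarith
  have h6 : 1 ≤ Real.exp t * P.real A := by
    have h7 := mul_le_mul_of_nonneg_left hQA ht0
    have h8 : t * (1 - q) = n * D + n * ε - n * ε / 2 := by rw [mul_sub, h4, ht]; ring
    rw [h8] at h7
    have h9 := h7.trans h3
    rw [← hD] at h9
    linarith
  rw [Real.exp_neg, inv_le_iff_one_le_mul₀ (Real.exp_pos _), mul_comm]
  exact h6

end

open MeasureTheory Filter Set
open scoped ENNReal NNReal

section
variable {X : Type*} [MeasurableSpace X] [TopologicalSpace X] [PolishSpace X] [BorelSpace X]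
  {κ : ∀ n : ℕ, Fin n → Measure ℝ}

theorem sanov_ET (hκ : CellKer κ) (μ : Measure X) [IsProbabilityMeasure μ]
    (T : ∀ n : ℕ, (Fin n → X) → ProbabilityMeasure (ℝ × X))
    (hT : ∀ n, 0 < n → ∀ x, (T n x).toMeasure =
      (n : ℝ≥0∞)⁻¹ • ∑ i, (κ n i).prod (Measure.dirac (x i))) (M : ℝ≥0) :
    ∃ K : Set (ProbabilityMeasure (ℝ × X)), IsCompact K ∧ ∀ᶠ n : ℕ in atTop,
      (Measure.pi fun _ : Fin n => μ) {x | T n x ∉ K} ≤ ENNReal.ofReal (Real.exp (-(n * M))) := by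
  set t : ℕ → ℝ := fun k => (M + k + 2) * (k + 1) with ht
  have ht0 : ∀ k, 0 ≤ t k := fun k => by positivity
  have htight := isTightMeasureSet_iff_exists_isCompact_measure_compl_le.1
    (isTightMeasureSet_singleton (μ := μ))
  have hex : ∀ k, ∃ C : Set X, IsCompact C ∧ μ Cᶜ ≤ ENNReal.ofReal (Real.exp (-(t k))) := fun k => by
    obtain ⟨C, h1, h2⟩ := htight (ENNReal.ofReal (Real.exp (-(t k))))
      (ENNReal.ofReal_pos.2 (Real.exp_pos _))
    exact ⟨C, h1, h2 μ rfl⟩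
  choose C hCc hCμ using hex
  set u : ℕ → ℝ≥0 := fun k => 1 / ((k:ℝ≥0) + 1) with hu
  have hulim : Tendsto u atTop (nhds 0) := tendsto_one_div_add_atTop_nhds_zero_nat
  refine ⟨{ν | ∀ k, ν ((Icc (0:ℝ) 1 ×ˢ C k)ᶜ) ≤ u k},
    isCompact_setOfPred_probabilityMeasure_mass_eq_compl_isCompact_le hulim
      (fun k => isCompact_Icc.prod (hCc k)) (Or.inl inferInstance), ?_⟩
  filter_upwards [eventually_gt_atTop 0] with n hn
  have hn' : (0:ℝ) < n := by exact_mod_cast hn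
  have hn1 : (1:ℝ) ≤ n := by exact_mod_cast hn
  have hCm : ∀ k, MeasurableSet (C k)ᶜ := fun k => (hCc k).measurableSet.compl
  set G : ℕ → X → ℝ := fun k => (C k)ᶜ.indicator (fun _ => t k) with hG
  have hGm : ∀ k, Measurable (G k) := fun k => measurable_const.indicator (hCm k)
  have hGb : ∀ k x, |G k x| ≤ t k := fun k x => by
    by_cases hx : x ∈ (C k)ᶜ
    · rw [hG]; simp only; rw [indicator_of_mem hx, abs_of_nonneg (ht0 k)]
    · rw [hG]; simp only; rw [indicator_of_notMem hx, abs_zero]; exact ht0 k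
  have hstep : ∀ k : ℕ, (Measure.pi fun _ : Fin n => μ) {x | n * (M + k + 2) ≤ ∑ i, G k (x i)} ≤
      ENNReal.ofReal (Real.exp (-(n * M))) * (2⁻¹ : ℝ≥0∞) ^ (k + 1) := by
    intro k
    refine (chernoff μ (fun _ => G k) (fun _ => hGm k) (fun _ => hGb k) _).trans ?_
    have e1 : ∫ x, Real.exp (G k x) ∂μ ≤ Real.exp 1 := by
      have h1 : ∫ x, Real.exp (G k x) ∂μ ≤
          ∫ x, (1 + (C k)ᶜ.indicator (fun _ => Real.exp (t k)) x) ∂μ := by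
        refine integral_mono (integrable_exp_bdd (hGm k) (hGb k))
          ((integrable_const _).add ((integrable_const _).indicator (hCm k))) fun x => ?_
        by_cases hx : x ∈ (C k)ᶜ
        · simp only [hG, indicator_of_mem hx]; linarith
        · simp only [hG, indicator_of_notMem hx]; simp
      rw [integral_add (integrable_const _) ((integrable_const _).indicator (hCm k)),
        integral_indicator_const _ (hCm k)] at h1
      have h2 : μ.real (C k)ᶜ ≤ Real.exp (-(t k)) :=
        ENNReal.toReal_le_of_le_ofReal (Real.exp_pos _).le (hCμ k)
      have h3 : μ.real (C k)ᶜ * Real.exp (t k) ≤ 1 := by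
        refine (mul_le_mul_of_nonneg_right h2 (Real.exp_pos _).le).trans ?_
        rw [← Real.exp_add]; simp
      simp only [integral_const, probReal_univ, smul_eq_mul, mul_one] at h1
      have h4 := Real.add_one_le_exp (1:ℝ)
      linarith
    have e2 : (2⁻¹ : ℝ≥0∞) ^ (k + 1) = ENNReal.ofReal ((2⁻¹ : ℝ) ^ (k + 1)) := by
      rw [ENNReal.ofReal_pow (by norm_num), ENNReal.ofReal_inv_of_pos (by norm_num)]; simp
    rw [e2, ← ENNReal.ofReal_mul (Real.exp_pos _).le]
    apply ENNReal.ofReal_le_ofReal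
    rw [Finset.prod_const, Finset.card_univ, Fintype.card_fin]
    have e3 : (∫ x, Real.exp (G k x) ∂μ) ^ n ≤ Real.exp n := by
      refine (pow_le_pow_left₀ (integral_nonneg fun x => (Real.exp_pos _).le) e1 n).trans ?_
      rw [← Real.exp_nat_mul, mul_one]
    have e4 : Real.exp (-((k:ℝ) + 1)) ≤ (2⁻¹ : ℝ) ^ (k + 1) := by
      have h4 := Real.add_one_le_exp (1:ℝ)
      have : Real.exp (-((k:ℝ) + 1)) = (Real.exp (-1)) ^ (k + 1) := by
        rw [← Real.exp_nat_mul]; push_cast; ring_nf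
      rw [this]
      refine pow_le_pow_left₀ (Real.exp_pos _).le ?_ _
      rw [Real.exp_neg]
      exact inv_anti₀ (by norm_num) (by linarith)
    calc Real.exp (-(n * (M + k + 2))) * (∫ x, Real.exp (G k x) ∂μ) ^ n
        ≤ Real.exp (-(n * (M + k + 2))) * Real.exp n :=
          mul_le_mul_of_nonneg_left e3 (Real.exp_pos _).le
      _ = Real.exp (-(n * M)) * Real.exp (-(n * ((k:ℝ) + 1))) := by
          rw [← Real.exp_add, ← Real.exp_add]; ring_nf
      _ ≤ Real.exp (-(n * M)) * Real.exp (-((k:ℝ) + 1)) := by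
          refine mul_le_mul_of_nonneg_left (Real.exp_le_exp.2 ?_) (Real.exp_pos _).le
          nlinarith [Nat.cast_nonneg (α := ℝ) k]
      _ ≤ _ := mul_le_mul_of_nonneg_left e4 (Real.exp_pos _).le
  have hsub : {x : Fin n → X | T n x ∉ {ν : ProbabilityMeasure (ℝ × X) |
      ∀ k, ν ((Icc (0:ℝ) 1 ×ˢ C k)ᶜ) ≤ u k}} ⊆ ⋃ k : ℕ, {x | n * (M + k + 2) ≤ ∑ i, G k (x i)} := by
    intro x hx
    have hx' : ¬ ∀ k, (T n x) ((Icc (0:ℝ) 1 ×ˢ C k)ᶜ) ≤ u k := hx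
    push Not at hx'
    obtain ⟨k, hk⟩ := hx'
    refine mem_iUnion.2 ⟨k, ?_⟩
    show n * (M + k + 2) ≤ ∑ i, G k (x i)
    have hB : MeasurableSet (Icc (0:ℝ) 1 ×ˢ C k)ᶜ :=
      (measurableSet_Icc.prod (hCc k).measurableSet).compl
    set f : ℝ × X → ℝ := (Icc (0:ℝ) 1 ×ˢ C k)ᶜ.indicator (fun _ => 1) with hf
    have hfm : Measurable f := measurable_const.indicator hB
    have hfb : ∀ z, |f z| ≤ 1 := fun z => by
      by_cases hz : z ∈ (Icc (0:ℝ) 1 ×ˢ C k)ᶜ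
      · rw [hf, indicator_of_mem hz]; simp
      · rw [hf, indicator_of_notMem hz]; simp
    have e1 := integral_T hκ hfm hfb n x _ (hT n hn x)
    rw [hf, integral_indicator_const _ hB, smul_eq_mul, mul_one, ← hf] at e1
    have e2 : ((u k : ℝ≥0) : ℝ) < (T n x).toMeasure.real (Icc (0:ℝ) 1 ×ˢ C k)ᶜ := by
      exact_mod_cast hk
    rw [e1, lt_inv_mul_iff₀ hn'] at e2
    have e3 : ∀ i, t k * smo κ f n i (x i) ≤ G k (x i) := by
      intro i
      have := hκ.prob n i
      by_cases hxi : x i ∈ (C k)ᶜ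
      · simp only [hG, indicator_of_mem hxi]
        have h1 := (le_abs_self _).trans (smo_bdd hκ hfb n i (x i))
        nlinarith [ht0 k]
      · simp only [hG, indicator_of_notMem hxi]
        have h0 : smo κ f n i (x i) = 0 := by
          refine integral_eq_zero_of_ae ?_
          filter_upwards [hκ.supp n hn i] with v hv
          have hv1 : v ∈ Icc (0:ℝ) 1 := by
            refine ⟨le_trans (by positivity) hv.1, hv.2.trans ?_⟩
            rw [div_le_one hn']; exact_mod_cast i.2
          rw [hf, indicator_of_notMem]
          · rfl
          · intro h
            exact h ⟨hv1, not_not.1 hxi⟩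
        rw [h0, mul_zero]
    have e4 : t k * ∑ i, smo κ f n i (x i) ≤ ∑ i, G k (x i) := by
      rw [Finset.mul_sum]; exact Finset.sum_le_sum fun i _ => e3 i
    refine le_trans ?_ e4
    have e5 := mul_le_mul_of_nonneg_left e2.le (ht0 k)
    refine le_trans (le_of_eq ?_) e5
    have hk1 : (k:ℝ) + 1 ≠ 0 := by positivity
    simp only [ht, hu]
    push_cast
    field_simp
  refine (measure_mono hsub).trans ((measure_iUnion_le _).trans ((ENNReal.tsum_le_tsum hstep).trans ?_))
  rw [ENNReal.tsum_mul_left, ENNReal.tsum_geometric_add_one, ENNReal.one_sub_inv_two, inv_inv,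
    ENNReal.inv_mul_cancel (by norm_num) (by norm_num), mul_one]

theorem sanov_gen (hκ : CellKer κ) (μ : Measure X) [IsProbabilityMeasure μ]
    (T : ∀ n : ℕ, (Fin n → X) → ProbabilityMeasure (ℝ × X))
    (hT : ∀ n, 0 < n → ∀ x, (T n x).toMeasure =
      (n : ℝ≥0∞)⁻¹ • ∑ i, (κ n i).prod (Measure.dirac (x i))) :
    SatisfiesLDP (fun n => Measure.pi fun _ : Fin n => μ) T
      (fun ν : ProbabilityMeasure (ℝ × X) => sanovRate μ ν.toMeasure) := by
  refine ldp_of_local _ _ _ ?_ ?_ (sanov_ET hκ μ T hT)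
  · intro ν a ha
    by_cases hν : inTM ν.toMeasure
    · simp only [sanovRate, if_pos hν] at ha
      exact sanov_LU_tm hκ μ T hT ν a ha
    · exact sanov_LU_not hκ μ T hT ν a hν
  · intro ν hI V hV ε hε
    by_cases hν : inTM ν.toMeasure
    · simp only [sanovRate, if_pos hν] at hI ⊢
      exact sanov_LL hκ μ T hT ν hν hI V hV ε hε
    · simp [sanovRate, if_neg hν] at hI

end

theorem cellKer_dirac : CellKer (fun n i => Measure.dirac ((((i : ℕ) : ℝ) + 1) / n)) where
  prob := fun n i => inferInstance
  supp := fun n hn i => by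
    have hn' : (0:ℝ) < n := by exact_mod_cast hn
    refine (ae_dirac_iff (p := fun u => u ∈ Icc (((i : ℕ) : ℝ)/n) ((((i : ℕ) : ℝ)+1)/n))
      measurableSet_Icc).2 ⟨?_, le_rfl⟩
    gcongr
    linarith

theorem cellKer_vol : CellKer (fun n i =>
    (n : ℝ≥0∞) • volume.restrict (Ioc (((i : ℕ) : ℝ)/n) ((((i : ℕ) : ℝ)+1)/n))) where
  prob := fun n i => ⟨by
    have hn : 0 < n := i.pos
    rw [Measure.smul_apply, Measure.restrict_apply_univ, vol_cell n hn, smul_eq_mul, nmul_inv n hn]⟩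
  supp := fun n hn i => by
    refine Measure.ae_smul_measure ?_ _
    filter_upwards [ae_restrict_mem measurableSet_Ioc] with u hu
    exact Ioc_subset_Icc_self hu

theorem empMeas_prob {X : Type*} [MeasurableSpace X] (n : ℕ) (hn : 0 < n) (x : Fin n → X) :
    IsProbabilityMeasure (empMeas n x) := by
  constructor
  rw [empMeas, Measure.smul_apply, Measure.finsetSum_apply]
  simp only [measure_univ, Finset.sum_const, Finset.card_univ, Fintype.card_fin, nsmul_eq_mul,
    mul_one, smul_eq_mul]
  rw [mul_comm, nmul_inv n hn]

theorem unif01_split (n : ℕ) (hn : 0 < n) :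
    unif01 = Measure.sum fun i : Fin n =>
      volume.restrict (Ioc (((i : ℕ) : ℝ)/n) ((((i : ℕ) : ℝ)+1)/n)) := by
  have h : (⋃ i : Fin n, cidx n hn ⁻¹' {i}) = univ := by
    ext u; simp
  have h2 := Measure.restrict_iUnion (μ := unif01) (s := fun i : Fin n => cidx n hn ⁻¹' {i})
    (fun i j hij => Disjoint.preimage _ (by simpa using hij))
    (fun i => measurable_cidx n hn (measurableSet_singleton i))
  rw [h, Measure.restrict_univ] at h2
  simp_rw [unif01_restrict_cell] at h2
  exact h2

theorem tildeL_eq {X : Type*} [MeasurableSpace X] (n : ℕ) (hn : 0 < n) (x : Fin n → X)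
    (d : Measure (ℝ × X)) :
    tildeL n x d = (n : ℝ≥0∞)⁻¹ • ∑ i : Fin n, ((n : ℝ≥0∞) •
      volume.restrict (Ioc (((i : ℕ) : ℝ)/n) ((((i : ℕ) : ℝ)+1)/n))).prod (Measure.dirac (x i)) := by
  have hm : Measurable fun u : ℝ => (u, x (cidx n hn u)) :=
    measurable_id.prodMk ((measurable_of_finite x).comp (measurable_cidx n hn))
  have e0 : tildeL n x d = unif01.map (fun u => (u, x (cidx n hn u))) := by
    rw [tildeL, dif_pos hn]; rfl
  rw [e0]
  conv_lhs => rw [unif01_split n hn]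
  rw [Measure.map_sum hm.aemeasurable, Measure.sum_fintype, Finset.smul_sum]
  refine Finset.sum_congr rfl fun i _ => ?_
  rw [Measure.prod_smul_left, smul_smul, mul_comm, nmul_inv n hn, one_smul, Measure.prod_dirac]
  refine Measure.map_congr ?_
  filter_upwards [ae_restrict_mem measurableSet_Ioc] with u hu
  rw [(cidx_eq_iff n hn u (cell_subset n hn i hu) i).2 hu]

theorem tildeL_inTM {X : Type*} [MeasurableSpace X] (n : ℕ) (hn : 0 < n) (x : Fin n → X)
    (d : Measure (ℝ × X)) : IsProbabilityMeasure (tildeL n x d) ∧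
      (tildeL n x d).map Prod.fst = unif01 := by
  have hm : Measurable fun u : ℝ => (u, x (cidx n hn u)) :=
    measurable_id.prodMk ((measurable_of_finite x).comp (measurable_cidx n hn))
  have e0 : tildeL n x d = unif01.map (fun u => (u, x (cidx n hn u))) := by
    rw [tildeL, dif_pos hn]; rfl
  rw [e0]
  refine ⟨Measure.isProbabilityMeasure_map hm.aemeasurable, ?_⟩
  rw [Measure.map_map measurable_fst hm]
  exact Measure.map_id

/-- Lemma 2.1: LDP for the bivariate empirical measures `𝔏_n`
on `ℳ`, and for their continuous counterparts `𝔏̃_n` on `𝒯ℳ`. -/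
theorem bivariate_sanov
    {X : Type*} [MeasurableSpace X] [TopologicalSpace X] [PolishSpace X] [BorelSpace X]
    (μ : Measure X) [IsProbabilityMeasure μ] :
    SatisfiesLDP (fun n => Measure.pi fun _ : Fin n => μ)
      (fun n x => toProb (rhoP μ) (empMeas n x))
      (fun ν : ProbabilityMeasure (ℝ × X) => sanovRate μ ν.toMeasure) ∧
    SatisfiesLDP (fun n => Measure.pi fun _ : Fin n => μ)
      (fun n x => toTMsub (rhoTM μ) (tildeL n x (unif01.prod μ)))
      (fun ν : {ν : ProbabilityMeasure (ℝ × X) // ν.toMeasure.map Prod.fst = unif01} =>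
        KLdiv ν.1.toMeasure (unif01.prod μ)) := by
  constructor
  · refine sanov_gen cellKer_dirac μ _ fun n hn x => ?_
    have h := empMeas_prob n hn x
    have e : toProb (rhoP μ) (empMeas n x) = ⟨empMeas n x, h⟩ := dif_pos h
    rw [e]
    show empMeas n x = _
    simp only [empMeas, Measure.dirac_prod_dirac]
  · have h1 := sanov_gen cellKer_vol μ
      (fun n x => (toTMsub (rhoTM μ) (tildeL n x (unif01.prod μ))).1) fun n hn x => by
        have h := tildeL_inTM n hn x (unif01.prod μ)
        rw [toTMsub, dif_pos h]
        exact tildeL_eq n hn x _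
    have h2 := ldp_subtype (fun ν : ProbabilityMeasure (ℝ × X) => ν.toMeasure.map Prod.fst = unif01)
      _ (fun n x => toTMsub (rhoTM μ) (tildeL n x (unif01.prod μ))) _ (fun ν hν => by
        rw [sanovRate, if_neg]; exact fun h => hν h.2) h1
    have e : (fun ν : {ν : ProbabilityMeasure (ℝ × X) // ν.toMeasure.map Prod.fst = unif01} =>
        KLdiv ν.1.toMeasure (unif01.prod μ)) = fun ν => sanovRate μ ν.1.toMeasure := by
      funext ν
      rw [sanovRate, if_pos ⟨inferInstance, ν.2⟩]
    rw [e]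
    exact h2
end

section
/- Let H be a finite simple graph with v vertices, edge set E(H) and maximum degree Δ, and fix q>1. For measurable f=(f₁,…,f_v) with each f_a:[0,1]→[−1,1], define t(H,W,f) = ∫_{[0,1]^v} Π_{(a,b)∈E(H)} W(x_a,x_b) Π_{a=1}^v f_a(x_a) dx_a. (i) If W is a symmetric kernel with ‖W‖_{qΔ}<∞, then t(H,W,f) is well-defined and |t(H,W,f)| ≤ ‖W‖_{qΔ}^{|E(H)|}. (ii) If {Wₙ} and W are symmetric kernels with limsup_{n→∞}‖Wₙ‖_{qΔ}<∞, ‖W‖_{qΔ}<∞, and ‖Wₙ−W‖_□ → 0, then sup over all such f of |t(H,Wₙ,f) − t(H,W,f)| → 0 as n→∞. -/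
open MeasureTheory Filter Set
open scoped ENNReal NNReal

/-- `t(H,W,f) = ∫_{[0,1]^v} ∏_{(a,b) ∈ E(H)} W(x_a,x_b) ∏_a f_a(x_a) dx`. -/
noncomputable def tHWf {v : ℕ} (G : SimpleGraph (Fin v)) [DecidableRel G.Adj]
    (W : ℝ → ℝ → ℝ) (f : Fin v → ℝ → ℝ) : ℝ :=
  ∫ x : Fin v → ℝ, edgeProd G (fun a b => W (x a) (x b)) * ∏ a, f a (x a)
    ∂(Measure.pi fun _ : Fin v => unif01)

theorem finner_aux {ι κ : Type*} [Fintype ι] [DecidableEq ι] [DecidableEq κ] (μ : Measure ℝ)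
    [IsProbabilityMeasure μ] (E : Finset κ) (g : κ → (ι → ℝ) → ℝ≥0∞)
    (hg : ∀ e, Measurable (g e)) (dep : κ → Finset ι)
    (hdep : ∀ e, ∀ i, i ∉ dep e → ∀ x y, g e (Function.update x i y) = g e x)
    (d : ℕ) (hd : d ≠ 0) (hdeg : ∀ i, (E.filter (fun e => i ∈ dep e)).card ≤ d)
    (s : Finset ι) (x : ι → ℝ) :
    (∫⋯∫⁻_s, (fun x => ∏ e ∈ E, g e x ^ (1 / (d : ℝ))) ∂(fun _ => μ)) x ≤
      ∏ e ∈ E, ((∫⋯∫⁻_s, g e ∂(fun _ => μ)) x) ^ (1 / (d : ℝ)) := by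
  induction s using Finset.induction_on generalizing x with
  | empty => simp
  | insert a s ha ih =>
    have hm : Measurable (fun x => ∏ e ∈ E, g e x ^ (1 / (d : ℝ))) :=
      Finset.measurable_prod _ fun e _ => (hg e).pow_const _
    rw [lmarginal_insert _ hm ha]
    have hGm : ∀ e, Measurable (∫⋯∫⁻_s, g e ∂(fun _ => μ)) := fun e => (hg e).lmarginal _
    have hconst : ∀ e, a ∉ dep e → ∀ y,
        (∫⋯∫⁻_s, g e ∂(fun _ => μ)) (Function.update x a y) = (∫⋯∫⁻_s, g e ∂(fun _ => μ)) x := by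
      intro e he y
      rw [lmarginal_update_of_notMem (hg e) ha]
      have hcomp : g e ∘ (Function.update · a y) = g e := funext fun z => hdep e a he z y
      rw [hcomp]
    have hd0 : (0:ℝ) < d := by exact_mod_cast Nat.pos_of_ne_zero hd
    calc ∫⁻ y, (∫⋯∫⁻_s, (fun x => ∏ e ∈ E, g e x ^ (1 / (d : ℝ))) ∂(fun _ => μ))
            (Function.update x a y) ∂μ
        ≤ ∫⁻ y, ∏ e ∈ E, ((∫⋯∫⁻_s, g e ∂(fun _ => μ)) (Function.update x a y)) ^ (1 / (d : ℝ)) ∂μ :=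
          lintegral_mono fun y => ih _
      _ = ∫⁻ y, (∏ e ∈ E.filter (fun e => ¬ a ∈ dep e),
              ((∫⋯∫⁻_s, g e ∂(fun _ => μ)) x) ^ (1 / (d : ℝ))) *
            ∏ e ∈ E.filter (fun e => a ∈ dep e),
              ((∫⋯∫⁻_s, g e ∂(fun _ => μ)) (Function.update x a y)) ^ (1 / (d : ℝ)) ∂μ := by
          congr 1
          funext y
          rw [← Finset.prod_filter_mul_prod_filter_not E (fun e => a ∈ dep e), mul_comm]
          congr 1
          refine Finset.prod_congr rfl fun e he => ?_
          rw [hconst e (Finset.mem_filter.1 he).2]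
      _ = (∏ e ∈ E.filter (fun e => ¬ a ∈ dep e),
              ((∫⋯∫⁻_s, g e ∂(fun _ => μ)) x) ^ (1 / (d : ℝ))) *
            ∫⁻ y, ∏ e ∈ E.filter (fun e => a ∈ dep e),
              ((∫⋯∫⁻_s, g e ∂(fun _ => μ)) (Function.update x a y)) ^ (1 / (d : ℝ)) ∂μ := by
          rw [lintegral_const_mul]
          exact Finset.measurable_prod _ fun e _ =>
            ((hGm e).comp (measurable_update x)).pow_const _
      _ ≤ (∏ e ∈ E.filter (fun e => ¬ a ∈ dep e),
              ((∫⋯∫⁻_s, g e ∂(fun _ => μ)) x) ^ (1 / (d : ℝ))) *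
            ∏ e ∈ E.filter (fun e => a ∈ dep e),
              (∫⁻ y, (∫⋯∫⁻_s, g e ∂(fun _ => μ)) (Function.update x a y) ∂μ) ^ (1 / (d : ℝ)) := by
          gcongr
          have := ENNReal.lintegral_mul_prod_norm_pow_le (μ := μ)
            (E.filter (fun e => a ∈ dep e)) (g := fun _ => 1)
            (f := fun e y => (∫⋯∫⁻_s, g e ∂(fun _ => μ)) (Function.update x a y))
            (by fun_prop) (fun e _ => ((hGm e).comp (measurable_update x)).aemeasurable)
            (1 - (E.filter (fun e => a ∈ dep e)).card / (d : ℝ)) (p := fun _ => 1 / (d : ℝ))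
            (by simp; ring)
            (by
              rw [sub_nonneg, div_le_one hd0]
              exact_mod_cast hdeg a)
            (fun _ _ => by positivity)
          simpa using this
      _ = ∏ e ∈ E, ((∫⋯∫⁻_insert a s, g e ∂(fun _ => μ)) x) ^ (1 / (d : ℝ)) := by
          rw [← Finset.prod_filter_mul_prod_filter_not E (fun e => a ∈ dep e), mul_comm]
          congr 1
          · refine Finset.prod_congr rfl fun e he => ?_
            rw [lmarginal_insert _ (hg e) ha]
          · refine Finset.prod_congr rfl fun e he => ?_
            rw [lmarginal_insert _ (hg e) ha]
            simp [hconst e (Finset.mem_filter.1 he).2]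

theorem finner {ι κ : Type*} [Fintype ι] [DecidableEq ι] [DecidableEq κ] (μ : Measure ℝ)
    [IsProbabilityMeasure μ] (E : Finset κ) (F : κ → (ι → ℝ) → ℝ≥0∞)
    (hF : ∀ e, Measurable (F e)) (dep : κ → Finset ι)
    (hdep : ∀ e, ∀ i, i ∉ dep e → ∀ x y, F e (Function.update x i y) = F e x)
    (d : ℕ) (hd : d ≠ 0) (hdeg : ∀ i, (E.filter (fun e => i ∈ dep e)).card ≤ d) :
    ∫⁻ x, ∏ e ∈ E, F e x ∂(Measure.pi fun _ : ι => μ) ≤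
      ∏ e ∈ E, (∫⁻ x, F e x ^ (d : ℝ) ∂(Measure.pi fun _ : ι => μ)) ^ (1 / (d : ℝ)) := by
  have := finner_aux μ E (fun e x => F e x ^ (d : ℝ)) (fun e => (hF e).pow_const _) dep
    (fun e i hi x y => by simp only [hdep e i hi]) d hd hdeg Finset.univ (fun _ => 0)
  have hd0 : (d:ℝ) ≠ 0 := by exact_mod_cast hd
  simpa [← ENNReal.rpow_mul, mul_inv_cancel₀ hd0, -ENNReal.rpow_natCast] using this

theorem pi_pair {ι : Type*} [Fintype ι] [DecidableEq ι] (μ : Measure ℝ)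
    [IsProbabilityMeasure μ] (a b : ι) (hab : a ≠ b) :
    MeasurePreserving (fun x : ι → ℝ => (x a, x b)) (Measure.pi fun _ : ι => μ) (μ.prod μ) := by
  refine ⟨by fun_prop, ?_⟩
  symm
  refine Measure.prod_eq fun S T hS hT => ?_
  rw [Measure.map_apply (by fun_prop) (hS.prod hT)]
  have : (fun x : ι → ℝ => (x a, x b)) ⁻¹' S ×ˢ T =
      Set.pi univ (fun i => if i = a then S else if i = b then T else univ) := by
    ext x
    simp only [mem_preimage, mem_prod, Set.mem_pi, mem_univ, true_imp_iff]
    constructor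
    · rintro ⟨h1, h2⟩ i
      split_ifs with h h'
      · subst h; exact h1
      · subst h'; exact h2
      · trivial
    · intro h
      have h1 := h a
      have h2 := h b
      simp [hab.symm] at h1 h2
      exact ⟨h1, h2⟩
  rw [this, Measure.pi_pi]
  have : ∀ i, μ (if i = a then S else if i = b then T else univ) =
      (if i = a then μ S else 1) * (if i = b then μ T else 1) := by
    intro i
    by_cases h : i = a
    · subst h; simp [hab]
    · by_cases h' : i = b
      · subst h'; simp [h]
      · simp [h, h']
  simp only [this, Finset.prod_mul_distrib, Finset.prod_ite_eq', Finset.mem_univ, if_true]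

theorem pi_update {ι : Type*} [Fintype ι] [DecidableEq ι] (μ : Measure ℝ)
    [IsProbabilityMeasure μ] (a : ι) :
    MeasurePreserving (fun z : (ι → ℝ) × ℝ => Function.update z.1 a z.2)
      ((Measure.pi fun _ : ι => μ).prod μ) (Measure.pi fun _ : ι => μ) := by
  have hm : Measurable (fun z : (ι → ℝ) × ℝ => Function.update z.1 a z.2) := by
    rw [measurable_pi_iff]
    intro i
    by_cases h : i = a
    · subst h; simpa using measurable_snd
    · simp [h]; fun_prop
  refine ⟨hm, ?_⟩
  symm
  refine Measure.pi_eq fun s hs => ?_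
  rw [Measure.map_apply hm (MeasurableSet.univ_pi hs)]
  have : (fun z : (ι → ℝ) × ℝ => Function.update z.1 a z.2) ⁻¹' (Set.pi univ s) =
      (Set.pi univ (fun i => if i = a then univ else s i)) ×ˢ (s a) := by
    ext z
    simp only [mem_preimage, mem_prod, Set.mem_pi, mem_univ, true_imp_iff]
    constructor
    · intro h
      refine ⟨fun i => ?_, by simpa using h a⟩
      split_ifs with hi
      · trivial
      · simpa [hi] using h i
    · rintro ⟨h1, h2⟩ i
      by_cases hi : i = a
      · subst hi; simpa using h2
      · simpa [hi] using h1 i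
  rw [this, Measure.prod_prod, Measure.pi_pi]
  rw [← Finset.mul_prod_erase _ _ (Finset.mem_univ a),
    ← Finset.mul_prod_erase Finset.univ (fun i => μ (s i)) (Finset.mem_univ a)]
  simp only [if_true, measure_univ, one_mul]
  rw [mul_comm]
  congr 1
  refine Finset.prod_congr rfl fun i hi => ?_
  simp [Finset.ne_of_mem_erase hi]

/-- The edges of the graph as ordered pairs. -/
def edgesOf {v : ℕ} (G : SimpleGraph (Fin v)) [DecidableRel G.Adj] : Finset (Fin v × Fin v) :=
  Finset.univ.filter (fun p : Fin v × Fin v => G.Adj p.1 p.2 ∧ p.1 < p.2)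

theorem edge_deg {v : ℕ} (G : SimpleGraph (Fin v)) [DecidableRel G.Adj] (i : Fin v) :
    ((edgesOf G).filter (fun p => i ∈ ({p.1, p.2} : Finset (Fin v)))).card ≤ G.maxDegree := by
  refine le_trans ?_ (G.degree_le_maxDegree i)
  rw [← SimpleGraph.card_neighborFinset_eq_degree]
  refine Finset.card_le_card_of_injOn (fun p => if p.1 = i then p.2 else p.1) ?_ ?_
  · rintro ⟨p, r⟩ hp
    simp [edgesOf] at hp ⊢
    obtain ⟨⟨h1, h2⟩, h3 | h3⟩ := hp
    · subst h3; simpa using h1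
    · subst h3
      split_ifs with h
      · exact absurd h h2.ne
      · exact h1.symm
  · rintro ⟨p, r⟩ hp ⟨p', r'⟩ hp' h
    simp [edgesOf] at hp hp' h ⊢
    grind

theorem edge_lintegral_le {v : ℕ} (G : SimpleGraph (Fin v)) [DecidableRel G.Adj]
    (hΔ : G.maxDegree ≠ 0) (K : Fin v × Fin v → ℝ → ℝ → ℝ)
    (hK : ∀ p, Measurable (Function.uncurry (K p))) :
    ∫⁻ x, ∏ p ∈ edgesOf G, ‖K p (x p.1) (x p.2)‖ₑ ∂(Measure.pi fun _ : Fin v => unif01) ≤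
      ∏ p ∈ edgesOf G, kerNorm (K p) (G.maxDegree : ℝ≥0∞) := by
  have hKm : ∀ p : Fin v × Fin v, Measurable (fun x : Fin v → ℝ => K p (x p.1) (x p.2)) :=
    fun p => (hK p).comp (f := fun x : Fin v → ℝ => (x p.1, x p.2)) (by fun_prop)
  refine (finner unif01 (edgesOf G) (fun p x => ‖K p (x p.1) (x p.2)‖ₑ)
    (fun p => (hKm p).enorm) (fun p => {p.1, p.2}) ?_ G.maxDegree hΔ (edge_deg G)).trans_eq ?_
  · intro p i hi x y
    simp at hi
    simp [Function.update_of_ne (Ne.symm hi.1), Function.update_of_ne (Ne.symm hi.2)]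
  · refine Finset.prod_congr rfl fun p hp => ?_
    have hne : p.1 ≠ p.2 := (Finset.mem_filter.1 hp).2.2.ne
    rw [kerNorm, eLpNorm_eq_lintegral_rpow_enorm_toReal (by simpa using hΔ) (by simp)]
    rw [← (pi_pair unif01 p.1 p.2 hne).lintegral_comp]
    · simp
    · exact (hK p).enorm.pow_const _
theorem unif_restrict (S : Set ℝ) (hS : MeasurableSet S) :
    volume.restrict (Set.Icc (0:ℝ) 1 ∩ S) = unif01.restrict S := by
  rw [unif01, Measure.restrict_restrict hS, Set.inter_comm]

theorem abs_le_cutDist (U V : ℝ → ℝ → ℝ)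
    (hD : Integrable (fun z : ℝ × ℝ => U z.1 z.2 - V z.1 z.2) (unif01.prod unif01))
    (S T : Set ℝ) (hS : MeasurableSet S) (hT : MeasurableSet T) :
    |∫ x in S, ∫ y in T, (U x y - V x y) ∂unif01 ∂unif01| ≤ cutDist U V := by
  have key : ∀ S T : {S : Set ℝ // MeasurableSet S},
      |∫ x in Set.Icc (0:ℝ) 1 ∩ S.1, ∫ y in Set.Icc (0:ℝ) 1 ∩ T.1, (U x y - V x y)| ≤
        ∫ z, |U z.1 z.2 - V z.1 z.2| ∂(unif01.prod unif01) := by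
    rintro ⟨S, hS⟩ ⟨T, hT⟩
    simp only
    rw [unif_restrict S hS, unif_restrict T hT]
    have h := setIntegral_prod (μ := unif01) (ν := unif01) (s := S) (t := T)
      (fun z : ℝ × ℝ => U z.1 z.2 - V z.1 z.2) hD.integrableOn
    simp only at h
    rw [← h]
    refine (abs_integral_le_integral_abs).trans ?_
    exact setIntegral_le_integral hD.abs (Eventually.of_forall fun z => abs_nonneg _)
  have h1 : |∫ x in S, ∫ y in T, (U x y - V x y) ∂unif01 ∂unif01| =
      |∫ x in Set.Icc (0:ℝ) 1 ∩ S, ∫ y in Set.Icc (0:ℝ) 1 ∩ T, (U x y - V x y)| := by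
    rw [unif_restrict S hS, unif_restrict T hT]
  rw [h1, cutDist]
  refine le_ciSup_of_le ?_ ⟨S, hS⟩ (le_ciSup_of_le ?_ ⟨T, hT⟩ le_rfl)
  · refine ⟨∫ z, |U z.1 z.2 - V z.1 z.2| ∂(unif01.prod unif01), ?_⟩
    rintro _ ⟨S, rfl⟩
    have : Nonempty {S : Set ℝ // MeasurableSet S} := ⟨⟨∅, MeasurableSet.empty⟩⟩
    exact ciSup_le fun T => key S T
  · refine ⟨∫ z, |U z.1 z.2 - V z.1 z.2| ∂(unif01.prod unif01), ?_⟩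
    rintro _ ⟨T, rfl⟩
    exact key ⟨S, hS⟩ T

theorem sign_split (μ : Measure ℝ) (φ g : ℝ → ℝ) (A : ℝ) (hA : ∀ x, |g x| ≤ A)
    (hφ : Integrable φ μ) (hφm : Measurable φ) :
    ∃ S : Set ℝ, MeasurableSet S ∧
      |∫ x, φ x * g x ∂μ| ≤ A * (|∫ x in S, φ x ∂μ| + |∫ x in Sᶜ, φ x ∂μ|) := by
  have hS : MeasurableSet {x | 0 < φ x} := measurableSet_lt measurable_const hφm
  refine ⟨{x | 0 < φ x}, hS, ?_⟩
  have hA0 : 0 ≤ A := (abs_nonneg _).trans (hA 0)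
  have h1 : |∫ x, φ x * g x ∂μ| ≤ ∫ x, A * |φ x| ∂μ := by
    rw [← Real.norm_eq_abs]
    refine norm_integral_le_of_norm_le (hφ.abs.const_mul A) (Eventually.of_forall fun x => ?_)
    rw [Real.norm_eq_abs, abs_mul, mul_comm]
    exact mul_le_mul_of_nonneg_right (hA x) (abs_nonneg _)
  refine h1.trans ?_
  rw [integral_const_mul]
  refine mul_le_mul_of_nonneg_left ?_ hA0
  rw [← integral_add_compl hS hφ.abs]
  refine add_le_add ?_ ?_
  · refine le_trans (le_of_eq ?_) (le_abs_self _)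
    exact setIntegral_congr_fun hS fun x hx => abs_of_pos hx
  · refine le_trans (le_of_eq ?_) (neg_le_abs _)
    rw [← integral_neg]
    exact setIntegral_congr_fun hS.compl fun x hx => abs_of_nonpos (not_lt.1 hx)

theorem cut_bound (μ : Measure ℝ) [IsProbabilityMeasure μ] (D : ℝ → ℝ → ℝ)
    (hDm : Measurable (Function.uncurry D)) (hD : Integrable (Function.uncurry D) (μ.prod μ))
    (k : ℝ) (hk : ∀ S T, MeasurableSet S → MeasurableSet T →
      |∫ x in S, ∫ y in T, D x y ∂μ ∂μ| ≤ k)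
    (g h : ℝ → ℝ) (hh : Measurable h) (A B : ℝ) (hA : ∀ x, |g x| ≤ A)
    (hB : ∀ x, |h x| ≤ B) :
    |∫ y, ∫ z, D y z * (g y * h z) ∂μ ∂μ| ≤ 4 * A * B * k := by
  have hA0 : 0 ≤ A := (abs_nonneg _).trans (hA 0)
  have hB0 : 0 ≤ B := (abs_nonneg _).trans (hB 0)
  have hDh : Integrable (fun z : ℝ × ℝ => D z.1 z.2 * h z.2) (μ.prod μ) := by
    refine Integrable.mul_bdd (c := B) hD ?_ ?_
    · exact (hh.comp measurable_snd).aestronglyMeasurable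
    · exact Eventually.of_forall fun z => hB z.2
  have hDhm : Measurable (fun z : ℝ × ℝ => D z.1 z.2 * h z.2) :=
    hDm.mul (hh.comp measurable_snd)
  have hS : ∀ S, MeasurableSet S →
      |∫ y in S, ∫ z, D y z * h z ∂μ ∂μ| ≤ B * (k + k) := by
    intro S hS
    have hr : (μ.restrict S).prod μ ≤ μ.prod μ :=
      Measure.prod_mono Measure.restrict_le_self le_rfl
    have e1 : ∫ y in S, ∫ z, D y z * h z ∂μ ∂μ = ∫ z, (∫ y in S, D y z ∂μ) * h z ∂μ := by
      rw [integral_integral_swap]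
      · simp_rw [integral_mul_const]
      · exact hDh.mono_measure hr
    rw [e1]
    obtain ⟨T, hT, h2⟩ := sign_split μ (fun z => ∫ y in S, D y z ∂μ) h B hB
      (hD.mono_measure hr).integral_prod_right
      (by
        exact (StronglyMeasurable.integral_prod_left' (μ := μ.restrict S)
          hDm.stronglyMeasurable).measurable)
    refine h2.trans (mul_le_mul_of_nonneg_left ?_ hB0)
    have e2 : ∀ T, MeasurableSet T →
        |∫ z in T, ∫ y in S, D y z ∂μ ∂μ| ≤ k := by
      intro T hT
      rw [integral_integral_swap]
      · exact hk S T hS hT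
      · exact hD.swap.mono_measure
          (Measure.prod_mono Measure.restrict_le_self Measure.restrict_le_self)
    exact add_le_add (e2 T hT) (e2 _ hT.compl)
  have e0 : ∫ y, ∫ z, D y z * (g y * h z) ∂μ ∂μ = ∫ y, (∫ z, D y z * h z ∂μ) * g y ∂μ := by
    congr 1
    funext y
    rw [← integral_mul_const]
    congr 1
    funext z
    ring
  rw [e0]
  obtain ⟨S, hSm, h2⟩ := sign_split μ (fun y => ∫ z, D y z * h z ∂μ) g A hA
    hDh.integral_prod_left
    (StronglyMeasurable.integral_prod_right' hDhm.stronglyMeasurable).measurable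
  refine h2.trans ?_
  have := add_le_add (hS S hSm) (hS _ hSm.compl)
  nlinarith [mul_le_mul_of_nonneg_left this hA0]
/-- Integrand of the multi-kernel version of `tHWf`. -/
def TTint {v : ℕ} (G : SimpleGraph (Fin v)) [DecidableRel G.Adj]
    (K : Fin v × Fin v → ℝ → ℝ → ℝ) (f : Fin v → ℝ → ℝ) (x : Fin v → ℝ) : ℝ :=
  (∏ p ∈ edgesOf G, K p (x p.1) (x p.2)) * ∏ a, f a (x a)

/-- Multi-kernel version of `tHWf`. -/
noncomputable def TT {v : ℕ} (G : SimpleGraph (Fin v)) [DecidableRel G.Adj]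
    (K : Fin v × Fin v → ℝ → ℝ → ℝ) (f : Fin v → ℝ → ℝ) : ℝ :=
  ∫ x : Fin v → ℝ, TTint G K f x ∂(Measure.pi fun _ : Fin v => unif01)

theorem meas_edge {v : ℕ} {K : ℝ → ℝ → ℝ} (hK : Measurable (Function.uncurry K))
    (p : Fin v × Fin v) : Measurable (fun x : Fin v → ℝ => K (x p.1) (x p.2)) :=
  hK.comp (f := fun x : Fin v → ℝ => (x p.1, x p.2)) (by fun_prop)

theorem TTint_meas {v : ℕ} (G : SimpleGraph (Fin v)) [DecidableRel G.Adj]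
    (K : Fin v × Fin v → ℝ → ℝ → ℝ) (hK : ∀ p, Measurable (Function.uncurry (K p)))
    (f : Fin v → ℝ → ℝ) (hf : ∀ a, Measurable (f a)) : Measurable (TTint G K f) := by
  unfold TTint
  refine Measurable.mul ?_ ?_
  · exact Finset.measurable_prod _ fun p _ => meas_edge (hK p) p
  · exact Finset.measurable_prod _ fun a _ => (hf a).comp (measurable_pi_apply a)

theorem abs_prod_le_one {ι : Type*} (s : Finset ι) (c : ι → ℝ) (hc : ∀ i ∈ s, |c i| ≤ 1) :
    |∏ i ∈ s, c i| ≤ 1 := by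
  rw [Finset.abs_prod]
  exact Finset.prod_le_one (fun _ _ => abs_nonneg _) hc

theorem TT_lint {v : ℕ} (G : SimpleGraph (Fin v)) [DecidableRel G.Adj]
    (hΔ : G.maxDegree ≠ 0)
    (K : Fin v × Fin v → ℝ → ℝ → ℝ) (hK : ∀ p, Measurable (Function.uncurry (K p)))
    (f : Fin v → ℝ → ℝ) (hf1 : ∀ a u, |f a u| ≤ 1) :
    ∫⁻ x, ‖TTint G K f x‖ₑ ∂(Measure.pi fun _ : Fin v => unif01) ≤
      ∏ p ∈ edgesOf G, kerNorm (K p) (G.maxDegree : ℝ≥0∞) := by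
  refine le_trans (lintegral_mono fun x => ?_) (edge_lintegral_le G hΔ K hK)
  have h1 : ‖TTint G K f x‖ₑ ≤ ‖∏ p ∈ edgesOf G, K p (x p.1) (x p.2)‖ₑ := by
    rw [TTint, enorm_mul]
    have : ‖∏ a, f a (x a)‖ₑ ≤ 1 := by
      rw [Real.enorm_eq_ofReal_abs]
      exact ENNReal.ofReal_le_one.2 (abs_prod_le_one _ _ fun a _ => hf1 a _)
    calc _ ≤ ‖∏ p ∈ edgesOf G, K p (x p.1) (x p.2)‖ₑ * 1 := by gcongr
      _ = _ := mul_one _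
  refine h1.trans (le_of_eq ?_)
  simp only [enorm_eq_nnnorm, nnnorm_prod, ENNReal.ofNNReal_finsetProd]

theorem TT_integrable {v : ℕ} (G : SimpleGraph (Fin v)) [DecidableRel G.Adj]
    (hΔ : G.maxDegree ≠ 0)
    (K : Fin v × Fin v → ℝ → ℝ → ℝ) (hK : ∀ p, Measurable (Function.uncurry (K p)))
    (hfin : ∀ p, kerNorm (K p) (G.maxDegree : ℝ≥0∞) ≠ ⊤)
    (f : Fin v → ℝ → ℝ) (hf : ∀ a, Measurable (f a)) (hf1 : ∀ a u, |f a u| ≤ 1) :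
    Integrable (TTint G K f) (Measure.pi fun _ : Fin v => unif01) := by
  refine ⟨(TTint_meas G K hK f hf).aestronglyMeasurable, ?_⟩
  refine (TT_lint G hΔ K hK f hf1).trans_lt ?_
  exact ENNReal.prod_lt_top fun p _ => (hfin p).lt_top

theorem TT_bound {v : ℕ} (G : SimpleGraph (Fin v)) [DecidableRel G.Adj]
    (hΔ : G.maxDegree ≠ 0)
    (K : Fin v × Fin v → ℝ → ℝ → ℝ) (hK : ∀ p, Measurable (Function.uncurry (K p)))
    (f : Fin v → ℝ → ℝ) (hf1 : ∀ a u, |f a u| ≤ 1) :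
    ENNReal.ofReal |TT G K f| ≤ ∏ p ∈ edgesOf G, kerNorm (K p) (G.maxDegree : ℝ≥0∞) := by
  rw [← Real.enorm_eq_ofReal_abs]
  exact (enorm_integral_le_lintegral_enorm _).trans (TT_lint G hΔ K hK f hf1)

theorem TT_bound_real {v : ℕ} (G : SimpleGraph (Fin v)) [DecidableRel G.Adj]
    (hΔ : G.maxDegree ≠ 0)
    (K : Fin v × Fin v → ℝ → ℝ → ℝ) (hK : ∀ p, Measurable (Function.uncurry (K p)))
    (f : Fin v → ℝ → ℝ) (hf1 : ∀ a u, |f a u| ≤ 1) (R : ℝ) (hR : 0 ≤ R)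
    (hKR : ∀ p, kerNorm (K p) (G.maxDegree : ℝ≥0∞) ≤ ENNReal.ofReal R) :
    |TT G K f| ≤ R ^ (edgesOf G).card := by
  have h := (TT_bound G hΔ K hK f hf1).trans (Finset.prod_le_prod' fun p _ => hKR p)
  rw [Finset.prod_const, ← ENNReal.ofReal_pow hR] at h
  exact (ENNReal.ofReal_le_ofReal_iff (by positivity)).1 h

/-- Truncation. -/
noncomputable def trunc (M t : ℝ) : ℝ := if |t| ≤ M then t else 0

theorem trunc_abs_le (M t : ℝ) : |trunc M t| ≤ |t| := by
  unfold trunc; split_ifs <;> simp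

theorem trunc_abs_le' (M t : ℝ) (hM : 0 ≤ M) : |trunc M t| ≤ M := by
  unfold trunc; split_ifs with h
  · exact h
  · simpa using hM

theorem trunc_meas (M : ℝ) : Measurable (trunc M) := by
  unfold trunc
  exact Measurable.ite (measurableSet_le (by fun_prop) (by fun_prop)) (by fun_prop) (by fun_prop)

theorem trunc_prod {κ : Type*} [DecidableEq κ] (E : Finset κ) (c : κ → ℝ) (M q : ℝ)
    (hM : 0 < M) (hq : 1 < q) :
    |∏ p ∈ E, c p - ∏ p ∈ E, trunc M (c p)| ≤
      ∑ e ∈ E, M ^ (1 - q) * (|c e| ^ q * ∏ p ∈ E.erase e, |c p|) := by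
  have hnn : ∀ e ∈ E, 0 ≤ M ^ (1 - q) * (|c e| ^ q * ∏ p ∈ E.erase e, |c p|) := fun e _ => by
    have : 0 ≤ ∏ p ∈ E.erase e, |c p| := Finset.prod_nonneg fun _ _ => abs_nonneg _
    positivity
  by_cases hall : ∀ p ∈ E, |c p| ≤ M
  · have : ∏ p ∈ E, trunc M (c p) = ∏ p ∈ E, c p :=
      Finset.prod_congr rfl fun p hp => by simp [trunc, hall p hp]
    rw [this, sub_self, abs_zero]
    exact Finset.sum_nonneg hnn
  · push Not at hall
    obtain ⟨e, he, hM'⟩ := hall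
    have : ∏ p ∈ E, trunc M (c p) = 0 :=
      Finset.prod_eq_zero he (by simp [trunc, not_le.2 hM'])
    rw [this, sub_zero, Finset.abs_prod]
    refine le_trans ?_ (Finset.single_le_sum hnn he)
    rw [← Finset.mul_prod_erase _ _ he, ← mul_assoc]
    refine mul_le_mul_of_nonneg_right ?_ (Finset.prod_nonneg fun _ _ => abs_nonneg _)
    have hc : 0 < |c e| := hM.trans hM'
    have h1 : |c e| ^ (1 - q) ≤ M ^ (1 - q) :=
      Real.rpow_le_rpow_of_nonpos hM hM'.le (by linarith)
    calc |c e| = |c e| ^ (1 - q) * |c e| ^ q := by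
          rw [← Real.rpow_add hc]; simp
      _ ≤ _ := by gcongr

theorem trunc_err {v : ℕ} (G : SimpleGraph (Fin v)) [DecidableRel G.Adj]
    (hΔ : G.maxDegree ≠ 0) (e0 : Fin v × Fin v) (he0 : e0 ∈ edgesOf G)
    (K : Fin v × Fin v → ℝ → ℝ → ℝ) (hK : ∀ p, Measurable (Function.uncurry (K p)))
    (f : Fin v → ℝ → ℝ) (hf : ∀ a, Measurable (f a)) (hf1 : ∀ a u, |f a u| ≤ 1)
    (q : ℝ) (hq : 1 < q) (M : ℝ) (hM : 1 ≤ M) (R : ℝ) (hR : 0 ≤ R)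
    (hKR : ∀ p, kerNorm (K p) (G.maxDegree : ℝ≥0∞) ≤ ENNReal.ofReal R)
    (hKq : ∀ p, p ≠ e0 →
      kerNorm (fun x y => |K p x y| ^ q) (G.maxDegree : ℝ≥0∞) ≤ ENNReal.ofReal R) :
    |TT G K f - TT G (fun p => if p = e0 then K e0 else fun x y => trunc M (K p x y)) f| ≤
      (edgesOf G).card * (M ^ (1 - q) * R ^ (edgesOf G).card) := by
  set K' : Fin v × Fin v → ℝ → ℝ → ℝ :=
    fun p => if p = e0 then K e0 else fun x y => trunc M (K p x y) with hK'
  have hK'm : ∀ p, Measurable (Function.uncurry (K' p)) := by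
    intro p
    by_cases h : p = e0
    · simp only [hK', h, if_true]; exact hK e0
    · simp only [hK', h, if_false]; exact (trunc_meas M).comp (hK p)
  have hK'R : ∀ p, kerNorm (K' p) (G.maxDegree : ℝ≥0∞) ≤ ENNReal.ofReal R := by
    intro p
    by_cases h : p = e0
    · simp only [hK', h, if_true]; exact hKR e0
    · simp only [hK', h, if_false]
      refine le_trans (eLpNorm_mono fun z => ?_) (hKR p)
      exact trunc_abs_le _ _
  have i1 := TT_integrable G hΔ K hK (fun p => ((hKR p).trans_lt ENNReal.ofReal_lt_top).ne) f hf hf1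
  have i2 := TT_integrable G hΔ K' hK'm
    (fun p => ((hK'R p).trans_lt ENNReal.ofReal_lt_top).ne) f hf hf1
  let L : Fin v × Fin v → Fin v × Fin v → ℝ → ℝ → ℝ := fun e p =>
    if p = e then fun x y => |K p x y| ^ q else fun x y => |K p x y|
  have hLm : ∀ e p, Measurable (Function.uncurry (L e p)) := by
    intro e p
    by_cases h : p = e
    · simp only [L, h, if_true]
      exact ((hK e).abs).pow_const q
    · simp only [L, h, if_false]; exact (hK p).abs
  have hLR : ∀ e, e ≠ e0 → ∀ p, kerNorm (L e p) (G.maxDegree : ℝ≥0∞) ≤ ENNReal.ofReal R := by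
    intro e he p
    by_cases h : p = e
    · simp only [L, h, if_true]; exact hKq e he
    · simp only [L, h, if_false]
      refine le_trans (eLpNorm_mono fun z => ?_) (hKR p)
      simp
  let one : Fin v → ℝ → ℝ := fun _ _ => 1
  have h1m : ∀ a, Measurable (one a) := fun a => measurable_const
  have h11 : ∀ a u, |one a u| ≤ 1 := fun a u => by simp [one]
  have iL : ∀ e ∈ (edgesOf G).erase e0, Integrable (TTint G (L e) one)
      (Measure.pi fun _ : Fin v => unif01) := fun e he =>
    TT_integrable G hΔ (L e) (hLm e) (fun p =>
      ((hLR e (Finset.ne_of_mem_erase he) p).trans_lt ENNReal.ofReal_lt_top).ne) one h1m h11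
  have hpt : ∀ x, ‖TTint G K f x - TTint G K' f x‖ ≤
      ∑ e ∈ (edgesOf G).erase e0, M ^ (1 - q) * TTint G (L e) one x := by
    intro x
    have h1 : TTint G K f x - TTint G K' f x =
        K e0 (x e0.1) (x e0.2) * (∏ p ∈ (edgesOf G).erase e0, K p (x p.1) (x p.2) -
          ∏ p ∈ (edgesOf G).erase e0, trunc M (K p (x p.1) (x p.2))) * ∏ a, f a (x a) := by
      unfold TTint
      rw [← Finset.mul_prod_erase _ _ he0, ← Finset.mul_prod_erase _ (fun p => K' p _ _) he0]
      have : ∏ p ∈ (edgesOf G).erase e0, K' p (x p.1) (x p.2) =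
          ∏ p ∈ (edgesOf G).erase e0, trunc M (K p (x p.1) (x p.2)) :=
        Finset.prod_congr rfl fun p hp => by simp [hK', Finset.ne_of_mem_erase hp]
      rw [this]
      simp only [hK', if_true]
      ring
    have h2 : ∀ e ∈ (edgesOf G).erase e0, TTint G (L e) one x =
        |K e0 (x e0.1) (x e0.2)| * (|K e (x e.1) (x e.2)| ^ q *
          ∏ p ∈ ((edgesOf G).erase e0).erase e, |K p (x p.1) (x p.2)|) := by
      intro e he
      unfold TTint
      rw [← Finset.mul_prod_erase _ _ he0, ← Finset.mul_prod_erase _ _ he]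
      have : ∏ p ∈ ((edgesOf G).erase e0).erase e, L e p (x p.1) (x p.2) =
          ∏ p ∈ ((edgesOf G).erase e0).erase e, |K p (x p.1) (x p.2)| :=
        Finset.prod_congr rfl fun p hp => by simp [L, Finset.ne_of_mem_erase hp]
      rw [this]
      simp [L, one, (Finset.ne_of_mem_erase he).symm]
    rw [h1, Real.norm_eq_abs, abs_mul, abs_mul]
    have h3 := trunc_prod ((edgesOf G).erase e0) (fun p => K p (x p.1) (x p.2)) M q
      (by linarith) hq
    calc _ ≤ |K e0 (x e0.1) (x e0.2)| * (∑ e ∈ (edgesOf G).erase e0,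
            M ^ (1 - q) * (|K e (x e.1) (x e.2)| ^ q *
              ∏ p ∈ ((edgesOf G).erase e0).erase e, |K p (x p.1) (x p.2)|)) * 1 := by
          have h4 := abs_prod_le_one Finset.univ (fun a => f a (x a)) (fun a _ => hf1 a _)
          gcongr
      _ = _ := by
          rw [mul_one, Finset.mul_sum]
          refine Finset.sum_congr rfl fun e he => ?_
          rw [h2 e he]
          ring
  rw [TT, TT, ← integral_sub i1 i2, ← Real.norm_eq_abs]
  have isum : ∀ e ∈ (edgesOf G).erase e0, Integrable (fun x => M ^ (1 - q) * TTint G (L e) one x)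
      (Measure.pi fun _ : Fin v => unif01) := fun e he => (iL e he).const_mul _
  refine (norm_integral_le_of_norm_le (integrable_finsetSum _ isum)
    (Eventually.of_forall hpt)).trans ?_
  rw [integral_finsetSum _ isum]
  have hMp : 0 ≤ M ^ (1 - q) := Real.rpow_nonneg (by linarith) _
  calc _ ≤ ∑ e ∈ (edgesOf G).erase e0, M ^ (1 - q) * R ^ (edgesOf G).card := by
        refine Finset.sum_le_sum fun e he => ?_
        rw [integral_const_mul]
        refine mul_le_mul_of_nonneg_left ?_ hMp
        exact (le_abs_self _).trans (TT_bound_real G hΔ (L e) (hLm e) one h11 R hR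
          (hLR e (Finset.ne_of_mem_erase he)))
    _ = ((edgesOf G).erase e0).card * (M ^ (1 - q) * R ^ (edgesOf G).card) := by
        rw [Finset.sum_const, nsmul_eq_mul]
    _ ≤ _ := by
        refine mul_le_mul_of_nonneg_right ?_ (by positivity)
        exact_mod_cast Finset.card_le_card (Finset.erase_subset _ _)
theorem abs_prod_le_pow {ι : Type*} (s : Finset ι) (c : ι → ℝ) (M : ℝ) (N : ℕ) (hM : 1 ≤ M)
    (hN : s.card ≤ N) (hc : ∀ i ∈ s, |c i| ≤ M) :
    |∏ i ∈ s, c i| ≤ M ^ N := by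
  rw [Finset.abs_prod]
  refine (Finset.prod_le_prod (fun _ _ => abs_nonneg _) hc).trans ?_
  rw [Finset.prod_const]
  exact pow_le_pow_right₀ hM hN

theorem cut_step {v : ℕ} (G : SimpleGraph (Fin v)) [DecidableRel G.Adj]
    (e0 : Fin v × Fin v) (he0 : e0 ∈ edgesOf G)
    (K : Fin v × Fin v → ℝ → ℝ → ℝ) (hK : ∀ p, Measurable (Function.uncurry (K p)))
    (f : Fin v → ℝ → ℝ) (hf : ∀ a, Measurable (f a)) (hf1 : ∀ a u, |f a u| ≤ 1)
    (hInt : Integrable (TTint G K f) (Measure.pi fun _ : Fin v => unif01))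
    (M : ℝ) (hM : 1 ≤ M) (hKM : ∀ p, p ≠ e0 → ∀ x y, |K p x y| ≤ M)
    (hD : Integrable (Function.uncurry (K e0)) (unif01.prod unif01))
    (k : ℝ) (hk : ∀ S T, MeasurableSet S → MeasurableSet T →
      |∫ x in S, ∫ y in T, K e0 x y ∂unif01 ∂unif01| ≤ k) :
    |TT G K f| ≤ 4 * M ^ (edgesOf G).card * M ^ (edgesOf G).card * k := by
  obtain ⟨a, b⟩ := e0
  have hab : a < b := (Finset.mem_filter.1 he0).2.2
  set P := (Measure.pi fun _ : Fin v => unif01) with hP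
  have hφ : MeasurePreserving (fun w : ((Fin v → ℝ) × ℝ) × ℝ =>
      Function.update (Function.update w.1.1 a w.1.2) b w.2) ((P.prod unif01).prod unif01) P :=
    (pi_update unif01 b).comp ((pi_update unif01 a).prod (MeasurePreserving.id unif01))
  have hm := TTint_meas G K hK f hf
  have i1 : Integrable (fun w : ((Fin v → ℝ) × ℝ) × ℝ => TTint G K f
      (Function.update (Function.update w.1.1 a w.1.2) b w.2)) ((P.prod unif01).prod unif01) :=
    hφ.integrable_comp_of_integrable hInt
  have e1 : TT G K f = ∫ x, ∫ y, ∫ z, TTint G K f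
      (Function.update (Function.update x a y) b z) ∂unif01 ∂unif01 ∂P := by
    rw [TT, ← hP]
    conv_lhs => rw [← hφ.map_eq]
    rw [integral_map hφ.measurable.aemeasurable hm.aestronglyMeasurable,
      integral_prod _ i1, integral_prod _ i1.integral_prod_left]
  have hx : ∀ x : Fin v → ℝ, ‖∫ y, ∫ z, TTint G K f
      (Function.update (Function.update x a y) b z) ∂unif01 ∂unif01‖ ≤
      4 * M ^ (edgesOf G).card * M ^ (edgesOf G).card * k := by
    intro x
    let E1 := ((edgesOf G).erase (a, b)).filter (fun p => p.1 = a ∨ p.2 = a)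
    let E2 := ((edgesOf G).erase (a, b)).filter (fun p => ¬ (p.1 = a ∨ p.2 = a))
    let g : ℝ → ℝ := fun y => (∏ p ∈ E1, K p (Function.update x a y p.1)
      (Function.update x a y p.2)) * f a y
    let h : ℝ → ℝ := fun z => (∏ p ∈ E2, K p (Function.update x b z p.1)
      (Function.update x b z p.2)) * ∏ i ∈ Finset.univ.erase a, f i (Function.update x b z i)
    have hfac : ∀ y z, TTint G K f (Function.update (Function.update x a y) b z) =
        K (a, b) y z * (g y * h z) := by
      intro y z
      unfold TTint
      rw [← Finset.mul_prod_erase _ _ he0,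
        ← Finset.prod_filter_mul_prod_filter_not ((edgesOf G).erase (a, b))
          (fun p => p.1 = a ∨ p.2 = a), ← Finset.mul_prod_erase _ _ (Finset.mem_univ a)]
      have p1 : ∏ p ∈ E1, K p (Function.update (Function.update x a y) b z p.1)
          (Function.update (Function.update x a y) b z p.2) =
          ∏ p ∈ E1, K p (Function.update x a y p.1) (Function.update x a y p.2) := by
        refine Finset.prod_congr rfl fun p hp => ?_
        have hp' : p.1 ≠ b ∧ p.2 ≠ b := by
          simp only [E1, edgesOf, Finset.mem_filter, Finset.mem_erase, Finset.mem_univ,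
            true_and] at hp
          obtain ⟨⟨h1, -, h2⟩, h3⟩ := hp
          obtain ⟨p, r⟩ := p
          simp only [ne_eq, Prod.mk.injEq] at h1 h2 h3 ⊢
          grind
        rw [Function.update_of_ne hp'.1, Function.update_of_ne hp'.2]
      have p2 : ∀ i, i ≠ a → Function.update (Function.update x a y) b z i =
          Function.update x b z i := by
        intro i hi
        by_cases hib : i = b
        · subst hib; simp
        · simp [hib, hi]
      have p3 : ∏ p ∈ E2, K p (Function.update (Function.update x a y) b z p.1)
          (Function.update (Function.update x a y) b z p.2) =
          ∏ p ∈ E2, K p (Function.update x b z p.1) (Function.update x b z p.2) := by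
        refine Finset.prod_congr rfl fun p hp => ?_
        have h3 := (Finset.mem_filter.1 hp).2
        push Not at h3
        rw [p2 _ h3.1, p2 _ h3.2]
      have p4 : ∏ i ∈ Finset.univ.erase a, f i (Function.update (Function.update x a y) b z i) =
          ∏ i ∈ Finset.univ.erase a, f i (Function.update x b z i) :=
        Finset.prod_congr rfl fun i hi => by rw [p2 _ (Finset.ne_of_mem_erase hi)]
      rw [p1, p3, p4]
      simp only [g, h, Function.update_self, Function.update_of_ne hab.ne]
      ring
    simp_rw [hfac]
    have hhm : Measurable h := by
      have hu : ∀ i, Measurable (fun z => Function.update x b z i) := fun i =>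
        (measurable_pi_apply i).comp (measurable_update x)
      refine Measurable.mul ?_ ?_
      · exact Finset.measurable_prod _ fun p _ => (hK p).comp ((hu p.1).prodMk (hu p.2))
      · exact Finset.measurable_prod _ fun i _ => (hf i).comp (hu i)
    have hcard : ∀ s, s ⊆ (edgesOf G).erase (a, b) → s.card ≤ (edgesOf G).card := fun s hs =>
      Finset.card_le_card (hs.trans (Finset.erase_subset _ _))
    have hMN : 0 ≤ M ^ (edgesOf G).card := by positivity
    refine cut_bound unif01 (K (a, b)) (hK _) hD k hk g h hhm _ _ ?_ ?_
    · intro y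
      simp only [g]
      rw [abs_mul, ← mul_one (M ^ _)]
      refine mul_le_mul ?_ (hf1 a y) (abs_nonneg _) hMN
      refine abs_prod_le_pow _ _ _ _ hM (hcard _ (Finset.filter_subset _ _)) fun p hp => ?_
      exact hKM p (Finset.ne_of_mem_erase (Finset.mem_filter.1 hp).1) _ _
    · intro z
      simp only [h]
      rw [abs_mul, ← mul_one (M ^ _)]
      refine mul_le_mul ?_ (abs_prod_le_one _ _ fun i _ => hf1 i _) (abs_nonneg _) hMN
      refine abs_prod_le_pow _ _ _ _ hM (hcard _ (Finset.filter_subset _ _)) fun p hp => ?_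
      exact hKM p (Finset.ne_of_mem_erase (Finset.mem_filter.1 hp).1) _ _
  rw [e1, ← Real.norm_eq_abs]
  refine (norm_integral_le_of_norm_le_const (Eventually.of_forall hx)).trans_eq ?_
  simp

theorem swap_bound {v : ℕ} (G : SimpleGraph (Fin v)) [DecidableRel G.Adj]
    (hΔ : G.maxDegree ≠ 0) (e0 : Fin v × Fin v) (he0 : e0 ∈ edgesOf G)
    (K : Fin v × Fin v → ℝ → ℝ → ℝ) (hK : ∀ p, Measurable (Function.uncurry (K p)))
    (f : Fin v → ℝ → ℝ) (hf : ∀ a, Measurable (f a)) (hf1 : ∀ a u, |f a u| ≤ 1)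
    (q : ℝ) (hq : 1 < q) (M : ℝ) (hM : 1 ≤ M) (R : ℝ) (hR : 0 ≤ R)
    (hKR : ∀ p, kerNorm (K p) (G.maxDegree : ℝ≥0∞) ≤ ENNReal.ofReal R)
    (hKq : ∀ p, p ≠ e0 →
      kerNorm (fun x y => |K p x y| ^ q) (G.maxDegree : ℝ≥0∞) ≤ ENNReal.ofReal R)
    (hD : Integrable (Function.uncurry (K e0)) (unif01.prod unif01))
    (k : ℝ) (hk : ∀ S T, MeasurableSet S → MeasurableSet T →
      |∫ x in S, ∫ y in T, K e0 x y ∂unif01 ∂unif01| ≤ k) :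
    |TT G K f| ≤ 4 * M ^ (edgesOf G).card * M ^ (edgesOf G).card * k +
      (edgesOf G).card * (M ^ (1 - q) * R ^ (edgesOf G).card) := by
  have h1 := trunc_err G hΔ e0 he0 K hK f hf hf1 q hq M hM R hR hKR hKq
  set K' : Fin v × Fin v → ℝ → ℝ → ℝ :=
    fun p => if p = e0 then K e0 else fun x y => trunc M (K p x y) with hK'
  have hK'm : ∀ p, Measurable (Function.uncurry (K' p)) := by
    intro p
    by_cases h : p = e0
    · simp only [hK', h, if_true]; exact hK e0
    · simp only [hK', h, if_false]; exact (trunc_meas M).comp (hK p)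
  have hK'R : ∀ p, kerNorm (K' p) (G.maxDegree : ℝ≥0∞) ≤ ENNReal.ofReal R := by
    intro p
    by_cases h : p = e0
    · simp only [hK', h, if_true]; exact hKR e0
    · simp only [hK', h, if_false]
      refine le_trans (eLpNorm_mono fun z => ?_) (hKR p)
      exact trunc_abs_le _ _
  have i2 := TT_integrable G hΔ K' hK'm
    (fun p => ((hK'R p).trans_lt ENNReal.ofReal_lt_top).ne) f hf hf1
  have he : K' e0 = K e0 := by simp [hK']
  have h2 := cut_step G e0 he0 K' hK'm f hf hf1 i2 M hM
    (fun p hp x y => by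
      simp only [hK', hp, if_false]
      exact trunc_abs_le' _ _ (by linarith)) (by rw [he]; exact hD) k (by rw [he]; exact hk)
  have := abs_sub_abs_le_abs_sub (TT G K f) (TT G K' f)
  linarith

theorem kerNorm_rpow (K : ℝ → ℝ → ℝ) (q : ℝ) (hq : 0 < q) (d : ℝ≥0∞) :
    kerNorm (fun x y => |K x y| ^ q) d = kerNorm K (ENNReal.ofReal q * d) ^ q := by
  rw [mul_comm]
  exact eLpNorm_norm_rpow (fun z : ℝ × ℝ => K z.1 z.2) hq

theorem kerNorm_mono_exp (K : ℝ → ℝ → ℝ) (hK : Measurable (Function.uncurry K)) (q : ℝ)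
    (hq : 1 < q) (d : ℝ≥0∞) : kerNorm K d ≤ kerNorm K (ENNReal.ofReal q * d) := by
  refine eLpNorm_le_eLpNorm_of_exponent_le ?_ hK.aestronglyMeasurable
  have : (1:ℝ≥0∞) ≤ ENNReal.ofReal q := by simpa using hq.le
  calc d = 1 * d := (one_mul d).symm
    _ ≤ _ := by gcongr

theorem tele_bound {v : ℕ} (G : SimpleGraph (Fin v)) [DecidableRel G.Adj]
    (hΔ : G.maxDegree ≠ 0) (q : ℝ) (hq : 1 < q) (U V : ℝ → ℝ → ℝ)
    (hU : Measurable (Function.uncurry U)) (hV : Measurable (Function.uncurry V))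
    (C : ℝ) (hC : 0 ≤ C)
    (hUC : kerNorm U (ENNReal.ofReal q * (G.maxDegree : ℝ≥0∞)) ≤ ENNReal.ofReal C)
    (hVC : kerNorm V (ENNReal.ofReal q * (G.maxDegree : ℝ≥0∞)) ≤ ENNReal.ofReal C)
    (M : ℝ) (hM : 1 ≤ M)
    (f : Fin v → ℝ → ℝ) (hf : ∀ a, Measurable (f a)) (hf1 : ∀ a u, |f a u| ≤ 1) :
    |TT G (fun _ => U) f - TT G (fun _ => V) f| ≤ (edgesOf G).card *
      (4 * M ^ (edgesOf G).card * M ^ (edgesOf G).card * cutDist U V +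
      (edgesOf G).card * (M ^ (1 - q) * (2 * C + C ^ q) ^ (edgesOf G).card)) := by
  set β := 4 * M ^ (edgesOf G).card * M ^ (edgesOf G).card * cutDist U V +
      (edgesOf G).card * (M ^ (1 - q) * (2 * C + C ^ q) ^ (edgesOf G).card) with hβ
  set R := 2 * C + C ^ q with hRdef
  have hCq : 0 ≤ C ^ q := Real.rpow_nonneg hC q
  have hR : 0 ≤ R := by positivity
  have hCR : ENNReal.ofReal C ≤ ENNReal.ofReal R := ENNReal.ofReal_le_ofReal (by linarith)
  have hq0 : 0 < q := by linarith
  have hUd := (kerNorm_mono_exp U hU q hq (G.maxDegree : ℝ≥0∞)).trans hUC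
  have hVd := (kerNorm_mono_exp V hV q hq (G.maxDegree : ℝ≥0∞)).trans hVC
  have hpow : ∀ W, kerNorm W (ENNReal.ofReal q * (G.maxDegree : ℝ≥0∞)) ≤ ENNReal.ofReal C →
      kerNorm (fun x y => |W x y| ^ q) (G.maxDegree : ℝ≥0∞) ≤ ENNReal.ofReal R := by
    intro W hW
    rw [kerNorm_rpow W q hq0]
    refine (ENNReal.rpow_le_rpow hW hq0.le).trans ?_
    rw [ENNReal.ofReal_rpow_of_nonneg hC hq0.le]
    exact ENNReal.ofReal_le_ofReal (by linarith)
  have hd1 : (1 : ℝ≥0∞) ≤ (G.maxDegree : ℝ≥0∞) := by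
    exact_mod_cast Nat.one_le_iff_ne_zero.2 hΔ
  have hDm : Measurable (Function.uncurry (fun x y => U x y - V x y)) := hU.sub hV
  have hDR : kerNorm (fun x y => U x y - V x y) (G.maxDegree : ℝ≥0∞) ≤ ENNReal.ofReal R := by
    refine (eLpNorm_sub_le (f := fun z : ℝ × ℝ => U z.1 z.2) (g := fun z : ℝ × ℝ => V z.1 z.2)
      hU.aestronglyMeasurable hV.aestronglyMeasurable hd1).trans ?_
    refine (add_le_add hUd hVd).trans ?_
    rw [← ENNReal.ofReal_add hC hC]
    exact ENNReal.ofReal_le_ofReal (by linarith)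
  have hDi : Integrable (Function.uncurry (fun x y => U x y - V x y)) (unif01.prod unif01) := by
    have : MemLp (Function.uncurry (fun x y => U x y - V x y)) (G.maxDegree : ℝ≥0∞)
        (unif01.prod unif01) :=
      ⟨hDm.aestronglyMeasurable, hDR.trans_lt ENNReal.ofReal_lt_top⟩
    exact this.integrable hd1
  have hcut := abs_le_cutDist U V hDi
  have main : ∀ s : Finset (Fin v × Fin v), s ⊆ edgesOf G →
      |TT G (fun p => if p ∈ s then U else V) f - TT G (fun _ => V) f| ≤ s.card * β := by
    intro s
    induction s using Finset.induction_on with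
    | empty => intro _; simp
    | insert e0 s hes ih =>
      intro hs
      have he0 : e0 ∈ edgesOf G := hs (Finset.mem_insert_self _ _)
      have ih' := ih ((Finset.subset_insert _ _).trans hs)
      have hmeas : ∀ t : Finset (Fin v × Fin v), ∀ p,
          Measurable (Function.uncurry (if p ∈ t then U else V)) := by
        intro t p; split_ifs
        · exact hU
        · exact hV
      have hle : ∀ t : Finset (Fin v × Fin v), ∀ p,
          kerNorm (if p ∈ t then U else V) (G.maxDegree : ℝ≥0∞) ≤ ENNReal.ofReal R := by
        intro t p; split_ifs
        · exact hUd.trans hCR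
        · exact hVd.trans hCR
      have hi : ∀ t : Finset (Fin v × Fin v), Integrable
          (TTint G (fun p => if p ∈ t then U else V) f) (Measure.pi fun _ : Fin v => unif01) :=
        fun t => TT_integrable G hΔ _ (hmeas t)
          (fun p => ((hle t p).trans_lt ENNReal.ofReal_lt_top).ne) f hf hf1
      let K : Fin v × Fin v → ℝ → ℝ → ℝ :=
        fun p => if p = e0 then fun x y => U x y - V x y else if p ∈ s then U else V
      have hKe : K e0 = fun x y => U x y - V x y := by simp [K]
      have hdiff : TT G (fun p => if p ∈ insert e0 s then U else V) f -
          TT G (fun p => if p ∈ s then U else V) f = TT G K f := by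
        rw [TT, TT, TT, ← integral_sub (hi _) (hi _)]
        congr 1
        funext x
        unfold TTint
        rw [← Finset.mul_prod_erase _ _ he0, ← Finset.mul_prod_erase _ _ he0,
          ← Finset.mul_prod_erase _ (fun p => K p (x p.1) (x p.2)) he0]
        have h1 : ∏ p ∈ (edgesOf G).erase e0,
            (if p ∈ insert e0 s then U else V) (x p.1) (x p.2) =
            ∏ p ∈ (edgesOf G).erase e0, (if p ∈ s then U else V) (x p.1) (x p.2) :=
          Finset.prod_congr rfl fun p hp => by
            simp [Finset.mem_insert, Finset.ne_of_mem_erase hp]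
        have h2 : ∏ p ∈ (edgesOf G).erase e0, K p (x p.1) (x p.2) =
            ∏ p ∈ (edgesOf G).erase e0, (if p ∈ s then U else V) (x p.1) (x p.2) :=
          Finset.prod_congr rfl fun p hp => by
            simp [K, Finset.ne_of_mem_erase hp]
        rw [h1, h2, hKe]
        simp only [Finset.mem_insert_self, if_true, hes, if_false]
        ring
      have hstep : |TT G K f| ≤ β := by
        refine swap_bound G hΔ e0 he0 K ?_ f hf hf1 q hq M hM R hR ?_ ?_ ?_ (cutDist U V) ?_
        · intro p
          by_cases h : p = e0
          · simp only [K, h, if_true]; exact hDm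
          · simp only [K, h, if_false]; exact hmeas s p
        · intro p
          by_cases h : p = e0
          · simp only [K, h, if_true]; exact hDR
          · simp only [K, h, if_false]; exact hle s p
        · intro p h
          simp only [K, h, if_false]
          split_ifs
          · exact hpow U hUC
          · exact hpow V hVC
        · rw [hKe]; exact hDi
        · rw [hKe]; exact fun S T hS hT => hcut S T hS hT
      rw [Finset.card_insert_of_notMem hes]
      push_cast
      have : TT G (fun p => if p ∈ insert e0 s then U else V) f - TT G (fun _ => V) f =
          TT G K f + (TT G (fun p => if p ∈ s then U else V) f - TT G (fun _ => V) f) := by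
        rw [← hdiff]; ring
      rw [this]
      refine (abs_add_le _ _).trans ?_
      linarith
  have hfin := main (edgesOf G) (Finset.Subset.refl _)
  have : TT G (fun p => if p ∈ edgesOf G then U else V) f = TT G (fun _ => U) f := by
    rw [TT, TT]
    congr 1
    funext x
    unfold TTint
    congr 1
    exact Finset.prod_congr rfl fun p hp => by simp [hp]
  rwa [this] at hfin
/-- Clamping to `[-1,1]`. -/
noncomputable def clampF {v : ℕ} (f : Fin v → ℝ → ℝ) : Fin v → ℝ → ℝ :=
  fun a u => max (-1) (min 1 (f a u))

theorem clampF_meas {v : ℕ} (f : Fin v → ℝ → ℝ) (hf : ∀ a, Measurable (f a)) (a : Fin v) :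
    Measurable (clampF f a) := measurable_const.max (measurable_const.min (hf a))

theorem clampF_abs {v : ℕ} (f : Fin v → ℝ → ℝ) (a : Fin v) (u : ℝ) : |clampF f a u| ≤ 1 := by
  unfold clampF
  rw [abs_le]
  exact ⟨le_max_left _ _, max_le (by norm_num) (min_le_left _ _)⟩

theorem clamp_ae {v : ℕ} (G : SimpleGraph (Fin v)) [DecidableRel G.Adj] (W : ℝ → ℝ → ℝ)
    (f : Fin v → ℝ → ℝ) (hf1 : ∀ a, ∀ u ∈ Set.Icc (0 : ℝ) 1, f a u ∈ Set.Icc (-1 : ℝ) 1) :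
    TTint G (fun _ => W) (clampF f) =ᵐ[Measure.pi fun _ : Fin v => unif01]
      fun x : Fin v → ℝ => edgeProd G (fun a b => W (x a) (x b)) * ∏ a, f a (x a) := by
  have h1 : ∀ᵐ u ∂unif01, u ∈ Set.Icc (0:ℝ) 1 := ae_restrict_mem measurableSet_Icc
  have h2 : ∀ᵐ x ∂(Measure.pi fun _ : Fin v => unif01), ∀ a, x a ∈ Set.Icc (0:ℝ) 1 := by
    rw [eventually_all]
    intro a
    exact (measurePreserving_eval (fun _ : Fin v => unif01) a).quasiMeasurePreserving.ae h1
  filter_upwards [h2] with x hx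
  unfold TTint
  congr 1
  refine Finset.prod_congr rfl fun a _ => ?_
  have := hf1 a (x a) (hx a)
  rw [clampF, min_eq_right this.2, max_eq_right this.1]

theorem tHWf_eq_TT {v : ℕ} (G : SimpleGraph (Fin v)) [DecidableRel G.Adj] (W : ℝ → ℝ → ℝ)
    (f : Fin v → ℝ → ℝ) (hf1 : ∀ a, ∀ u ∈ Set.Icc (0 : ℝ) 1, f a u ∈ Set.Icc (-1 : ℝ) 1) :
    tHWf G W f = TT G (fun _ => W) (clampF f) :=
  (integral_congr_ae (clamp_ae G W f hf1)).symm

theorem edges_empty {v : ℕ} (G : SimpleGraph (Fin v)) [DecidableRel G.Adj]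
    (hΔ : G.maxDegree = 0) : edgesOf G = ∅ := by
  rw [Finset.eq_empty_iff_forall_notMem]
  intro p hp
  have h := edge_deg G p.1
  rw [hΔ, Nat.le_zero, Finset.card_eq_zero] at h
  have : p ∈ (edgesOf G).filter (fun r => p.1 ∈ ({r.1, r.2} : Finset (Fin v))) := by
    simp [hp]
  rw [h] at this
  simp at this

/-- Proposition 3.1: boundedness and a counting lemma for `t(H,W,f)`. -/
theorem tHWf_bound_and_counting
    {v : ℕ} (G : SimpleGraph (Fin v)) [DecidableRel G.Adj] (q : ℝ) (hq : 1 < q) :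
    (∀ W : ℝ → ℝ → ℝ, Measurable (Function.uncurry W) → (∀ x y, W x y = W y x) →
      kerNorm W (ENNReal.ofReal q * (G.maxDegree : ℝ≥0∞)) ≠ ⊤ →
      ∀ f : Fin v → ℝ → ℝ, (∀ a, Measurable (f a)) →
        (∀ a, ∀ u ∈ Set.Icc (0 : ℝ) 1, f a u ∈ Set.Icc (-1 : ℝ) 1) →
        Integrable
          (fun x : Fin v → ℝ => edgeProd G (fun a b => W (x a) (x b)) * ∏ a, f a (x a))
          (Measure.pi fun _ : Fin v => unif01) ∧
        ENNReal.ofReal |tHWf G W f| ≤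
          kerNorm W (ENNReal.ofReal q * (G.maxDegree : ℝ≥0∞)) ^ edgeCard G) ∧
    (∀ (Wseq : ℕ → ℝ → ℝ → ℝ) (W : ℝ → ℝ → ℝ),
      (∀ n, Measurable (Function.uncurry (Wseq n))) →
      (∀ n x y, Wseq n x y = Wseq n y x) →
      Measurable (Function.uncurry W) → (∀ x y, W x y = W y x) →
      Filter.atTop.limsup
          (fun n => kerNorm (Wseq n) (ENNReal.ofReal q * (G.maxDegree : ℝ≥0∞))) ≠ ⊤ →
      kerNorm W (ENNReal.ofReal q * (G.maxDegree : ℝ≥0∞)) ≠ ⊤ →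
      Tendsto (fun n => cutDist (Wseq n) W) atTop (nhds 0) →
      Tendsto (fun n => ⨆ f : {f : Fin v → ℝ → ℝ // (∀ a, Measurable (f a)) ∧
            ∀ a, ∀ u ∈ Set.Icc (0 : ℝ) 1, f a u ∈ Set.Icc (-1 : ℝ) 1},
          |tHWf G (Wseq n) f.1 - tHWf G W f.1|) atTop (nhds 0)) := by
  constructor
  · intro W hW _ hfin f hf hf1
    have hae := clamp_ae G W f hf1
    rw [tHWf_eq_TT G W f hf1]
    by_cases hΔ : G.maxDegree = 0
    · have hE := edges_empty G hΔ
      have hle : ∀ x, ‖TTint G (fun _ => W) (clampF f) x‖ ≤ 1 := by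
        intro x
        simp only [TTint, hE, Finset.prod_empty, one_mul]
        exact abs_prod_le_one _ _ fun a _ => clampF_abs f a _
      have hi : Integrable (TTint G (fun _ => W) (clampF f))
          (Measure.pi fun _ : Fin v => unif01) :=
        Integrable.of_bound
          (TTint_meas G _ (fun _ => hW) _ (clampF_meas f hf)).aestronglyMeasurable 1
          (Eventually.of_forall hle)
      refine ⟨hi.congr hae, ?_⟩
      have hc : edgeCard G = 0 := by
        change (edgesOf G).card = 0
        rw [hE, Finset.card_empty]
      rw [hc, pow_zero]
      refine ENNReal.ofReal_le_one.2 ?_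
      have := norm_integral_le_of_norm_le_const (μ := Measure.pi fun _ : Fin v => unif01)
        (Eventually.of_forall hle)
      simpa [TT] using this
    · have hd := kerNorm_mono_exp W hW q hq (G.maxDegree : ℝ≥0∞)
      refine ⟨(TT_integrable G hΔ (fun _ => W) (fun _ => hW)
        (fun _ => (hd.trans_lt hfin.lt_top).ne) _ (clampF_meas f hf) (clampF_abs f)).congr hae, ?_⟩
      refine (TT_bound G hΔ (fun _ => W) (fun _ => hW) _ (clampF_abs f)).trans ?_
      rw [Finset.prod_const]
      change _ ≤ _ ^ (edgesOf G).card
      gcongr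
  · intro Wseq W hWs _ hW _ hlim hfin hcut
    by_cases hΔ : G.maxDegree = 0
    · have hE := edges_empty G hΔ
      have h0 : ∀ n, (⨆ f : {f : Fin v → ℝ → ℝ // (∀ a, Measurable (f a)) ∧
            ∀ a, ∀ u ∈ Set.Icc (0 : ℝ) 1, f a u ∈ Set.Icc (-1 : ℝ) 1},
          |tHWf G (Wseq n) f.1 - tHWf G W f.1|) = 0 := by
        intro n
        have : ∀ f : {f : Fin v → ℝ → ℝ // (∀ a, Measurable (f a)) ∧
            ∀ a, ∀ u ∈ Set.Icc (0 : ℝ) 1, f a u ∈ Set.Icc (-1 : ℝ) 1},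
            |tHWf G (Wseq n) f.1 - tHWf G W f.1| = 0 := by
          intro f
          rw [tHWf_eq_TT G _ f.1 f.2.2, tHWf_eq_TT G _ f.1 f.2.2]
          simp [TT, TTint, hE]
        simp [this]
      simp only [h0]
      exact tendsto_const_nhds
    · obtain ⟨c, hc1, hc2⟩ := ENNReal.lt_iff_exists_nnreal_btwn.1 hlim.lt_top
      have hev := eventually_lt_of_limsup_lt hc1
      set C : ℝ := (c : ℝ) +
        (kerNorm W (ENNReal.ofReal q * (G.maxDegree : ℝ≥0∞))).toReal with hCdef
      have hC : 0 ≤ C := by positivity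
      have hWC : kerNorm W (ENNReal.ofReal q * (G.maxDegree : ℝ≥0∞)) ≤ ENNReal.ofReal C := by
        rw [← ENNReal.ofReal_toReal hfin]
        refine ENNReal.ofReal_le_ofReal ?_
        rw [hCdef]
        have := c.2
        linarith [NNReal.coe_nonneg c]
      have hcC : (c : ℝ≥0∞) ≤ ENNReal.ofReal C := by
        rw [← ENNReal.ofReal_coe_nnreal]
        refine ENNReal.ofReal_le_ofReal ?_
        rw [hCdef]
        linarith [ENNReal.toReal_nonneg
          (a := kerNorm W (ENNReal.ofReal q * (G.maxDegree : ℝ≥0∞)))]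
      rw [Metric.tendsto_nhds]
      intro ε hε
      set N := (edgesOf G).card with hN
      have hM1 : Tendsto (fun M : ℝ => (N : ℝ) * (N * (M ^ (-(q - 1)) * (2 * C + C ^ q) ^ N)))
          atTop (nhds ((N : ℝ) * (N * (0 * (2 * C + C ^ q) ^ N)))) :=
        (((tendsto_rpow_neg_atTop (by linarith : 0 < q - 1)).mul_const _).const_mul _).const_mul _
      have hM2 : ∀ᶠ M : ℝ in atTop,
          (N : ℝ) * (N * (M ^ (-(q - 1)) * (2 * C + C ^ q) ^ N)) < ε / 4 :=
        hM1.eventually_lt_const (by simp; linarith)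
      obtain ⟨M, hMlt, hMge⟩ := (hM2.and (eventually_ge_atTop 1)).exists
      have hn1 : Tendsto (fun n => (N : ℝ) * (4 * M ^ N * M ^ N * cutDist (Wseq n) W)) atTop
          (nhds ((N : ℝ) * (4 * M ^ N * M ^ N * 0))) := (hcut.const_mul _).const_mul _
      have hn2 : ∀ᶠ n in atTop, (N : ℝ) * (4 * M ^ N * M ^ N * cutDist (Wseq n) W) < ε / 4 :=
        hn1.eventually_lt_const (by simp; linarith)
      filter_upwards [hev, hn2] with n h1 h2
      rw [Real.dist_eq, sub_zero, abs_of_nonneg (Real.iSup_nonneg fun _ => abs_nonneg _)]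
      refine lt_of_le_of_lt (Real.iSup_le (a := ε / 2) (fun f => ?_) (by linarith)) (by linarith)
      rw [tHWf_eq_TT G _ f.1 f.2.2, tHWf_eq_TT G _ f.1 f.2.2]
      have hb := tele_bound G hΔ q hq (Wseq n) W (hWs n) hW C hC (h1.le.trans hcC) hWC M hMge
        (clampF f.1) (clampF_meas _ f.2.1) (clampF_abs _)
      rw [← hN, show (1 - q) = -(q - 1) by ring, mul_add] at hb
      linarith
end
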